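/- arXiv:1204.1440 — 7 statements merged into one kernel-verified Lean document; each statement's English description precedes it below -/
import Mathlib

section
/- For all integers n and k with 2 ≤ k ≤ n−1 and every integer h with 0 ≤ h ≤ n−k, the h-super connectivity of the (n,k)-star graph satisfies κ_s^{(h)}(S_{n,k}) = n + h(k−2) − 1. -/
/-!
Write `r = n - k`, let `z` be the first position, and call the set of vertices with prescribed
entries at all positions other than `z` a clique (it is a complete graph on `r + 1` vertices).

*Upper bound.* The neighbourhood of `h + 1` vertices of one clique has `n + h (k - 2) - 1` elements
and is an `h`-super cut (`exists_cut`): every other clique loses at most one vertex to it, and a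
vertex whose clique loses one keeps a swap-neighbour outside the cut.

*Lower bound.* The bound is proved by induction on the number `M + 1` of free positions for all
substars `Cp z T c`, in which the entries outside `T ∪ {z}` are frozen (`sep_bound`). Let `S`
separate `X` from `Y`, with internal degrees at least `h`. Fix `t ∈ T` and cut the substar into
copies according to the entry at `t`. Every vertex has exactly one neighbour outside its copy, and
these edges form a perfect matching with many edges between any two copies.

* If two copies meet both `X` and `Y`, the induction hypothesis with `h - 1` applies to both
  (`StarSep.restrict`) and the two bounds add up to enough.
* If some copy is contained in `S`, or if some copies avoid `Y`, some avoid `X`, and at most one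
  meets both, then `S` has to hit all the matching edges between two classes of copies, which is
  enough (`match_card`, `mat_bound`).
* Otherwise one side lies in one copy and the other side meets all copies (`pos_cases`).

If the last case occurs at every `t ∈ T`, the confined side is the same for all `t`: a side `X`
meeting all copies at `t₀` contains a vertex with entry `d` at `t₀`, so `X` cannot have constant
entry `d` at another position. Hence the confined side lies in one clique (`bound_of_pos`), and its
neighbourhood can be counted directly (`clique_bound`).
-/

/-- A vertex of the `(n,k)`-star graph: a `k`-permutation of `{1,…,n}`,
encoded as an injective function `Fin k → Fin n`. -/
def NKVertex (n k : ℕ) : Type := {p : Fin k → Fin n // Function.Injective p}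

/-- `SwapRel p q` : `q` is obtained from `p` by swapping the first bit with the
`i`-th bit for some `i ≠ 1` (a swap-edge). -/
def SwapRel {n k : ℕ} (p q : NKVertex n k) : Prop :=
  ∃ (hk : 0 < k) (i : Fin k), (i : ℕ) ≠ 0 ∧ q.1 = p.1 ∘ Equiv.swap ⟨0, hk⟩ i

/-- `UnswapRel p q` : `q` is obtained from `p` by replacing the first bit by a
symbol not occurring in `p` (an unswap-edge). -/
def UnswapRel {n k : ℕ} (p q : NKVertex n k) : Prop :=
  ∃ (hk : 0 < k), (∀ j : Fin k, (j : ℕ) ≠ 0 → q.1 j = p.1 j) ∧ q.1 ⟨0, hk⟩ ∉ Set.range p.1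

/-- The `(n,k)`-star graph `S_{n,k}`. -/
def nkStar (n k : ℕ) : SimpleGraph (NKVertex n k) :=
  SimpleGraph.fromRel (fun p q => SwapRel p q ∨ UnswapRel p q)

/-- `S` is an `h`-super vertex-cut of `G`: `G − S` is disconnected and every
vertex of `G − S` has degree at least `h` in `G − S`. -/
def IsHSuperCut {V : Type*} (G : SimpleGraph V) (h : ℕ) (S : Set V) : Prop :=
  ¬ (G.induce Sᶜ).Connected ∧ ∀ v ∈ Sᶜ, h ≤ (G.neighborSet v ∩ Sᶜ).ncard

/-- The `h`-super connectivity `κ_s^{(h)}(G)`: the minimum cardinality of an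
`h`-super vertex-cut of `G`. -/
noncomputable def hSuperConn {V : Type*} (G : SimpleGraph V) (h : ℕ) : ℕ :=
  sInf (Set.ncard '' {S : Set V | IsHSuperCut G h S})

section Helpers

open scoped Classical

variable {n k : ℕ}

noncomputable instance : Fintype (NKVertex n k) :=
  inferInstanceAs (Fintype {p : Fin k → Fin n // Function.Injective p})

/-! ### Moves on vertices -/

theorem NKVertex.ext' {p q : NKVertex n k} (h : ∀ j, p.1 j = q.1 j) : p = q :=
  Subtype.ext (funext h)

/-- The vertex obtained from `p` by exchanging the entries at positions `z` and `i`. -/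
def sw (z : Fin k) (p : NKVertex n k) (i : Fin k) : NKVertex n k :=
  ⟨p.1 ∘ Equiv.swap z i, p.2.comp (Equiv.injective _)⟩

theorem sw_z (z : Fin k) (p : NKVertex n k) (i : Fin k) : (sw z p i).1 z = p.1 i := by
  simp [sw]

theorem sw_i (z : Fin k) (p : NKVertex n k) (i : Fin k) : (sw z p i).1 i = p.1 z := by
  simp [sw]

theorem sw_ne {z : Fin k} (p : NKVertex n k) {i j : Fin k} (hz : j ≠ z) (hi : j ≠ i) :
    (sw z p i).1 j = p.1 j := by
  simp [sw, Equiv.swap_apply_of_ne_of_ne hz hi]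

theorem sw_inj {z : Fin k} {p q : NKVertex n k} {i : Fin k} (h : sw z p i = sw z q i) : p = q := by
  apply NKVertex.ext'
  intro j
  have := congrArg (fun v : NKVertex n k => v.1 (Equiv.swap z i j)) h
  simpa [sw] using this

/-- The vertex obtained from `p` by exchanging the symbols `p s` and `a`, so that its entry at
position `s` becomes `a`. -/
def rl (p : NKVertex n k) (s : Fin k) (a : Fin n) : NKVertex n k :=
  ⟨Equiv.swap (p.1 s) a ∘ p.1, (Equiv.injective _).comp p.2⟩

theorem rl_self (p : NKVertex n k) (s : Fin k) (a : Fin n) : (rl p s a).1 s = a := by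
  simp [rl]

theorem rl_ne (p : NKVertex n k) {s j : Fin k} {a : Fin n} (hj : j ≠ s) (ha : p.1 j ≠ a) :
    (rl p s a).1 j = p.1 j := by
  have : p.1 j ≠ p.1 s := fun h => hj (p.2 h)
  simp [rl, Equiv.swap_apply_of_ne_of_ne this ha]

theorem adj_iff {z : Fin k} (hz : (z : ℕ) = 0) (p q : NKVertex n k) :
    (nkStar n k).Adj p q ↔
      (∃ i, i ≠ z ∧ q = sw z p i) ∨ (p ≠ q ∧ ∀ j, j ≠ z → q.1 j = p.1 j) := by
  have hzz : ∀ hk : 0 < k, (⟨0, hk⟩ : Fin k) = z := fun hk => Fin.ext hz.symm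
  have hnz : ∀ j : Fin k, (j : ℕ) ≠ 0 ↔ j ≠ z := fun j => by
    rw [← hz, Ne, Ne, Fin.ext_iff]
  have hk : 0 < k := z.pos
  have hS : ∀ p q : NKVertex n k, SwapRel p q ↔ ∃ i, i ≠ z ∧ q = sw z p i := by
    intro p q
    simp only [SwapRel, hzz, hnz]
    constructor
    · rintro ⟨_, i, hi, h⟩
      exact ⟨i, hi, Subtype.ext h⟩
    · rintro ⟨i, hi, rfl⟩
      exact ⟨hk, i, hi, rfl⟩
  have hU : ∀ p q : NKVertex n k, UnswapRel p q ↔ (p ≠ q ∧ ∀ j, j ≠ z → q.1 j = p.1 j) := by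
    intro p q
    simp only [UnswapRel, hzz, hnz]
    constructor
    · rintro ⟨_, h1, h2⟩
      refine ⟨?_, h1⟩
      rintro rfl
      exact h2 ⟨z, rfl⟩
    · rintro ⟨h1, h2⟩
      refine ⟨hk, h2, ?_⟩
      rintro ⟨j, hj⟩
      by_cases hjz : j = z
      · subst hjz
        apply h1
        apply NKVertex.ext'
        intro i
        by_cases hi : i = j
        · subst hi; exact hj
        · exact (h2 i hi).symm
      · rw [← h2 j hjz] at hj
        exact hjz (q.2 hj)
  rw [nkStar, SimpleGraph.fromRel_adj]
  simp only [hS, hU]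
  constructor
  · rintro ⟨hne, (h | h) | (⟨i, hi, rfl⟩ | h)⟩
    · exact Or.inl h
    · exact Or.inr h
    · refine Or.inl ⟨i, hi, NKVertex.ext' fun j => ?_⟩
      simp [sw]
    · exact Or.inr ⟨h.1.symm, fun j hj => (h.2 j hj).symm⟩
  · rintro (⟨i, hi, rfl⟩ | h)
    · refine ⟨fun h => ?_, Or.inl (Or.inl ⟨i, hi, rfl⟩)⟩
      have := congrArg (fun v : NKVertex n k => v.1 z) h
      simp only [sw_z] at this
      exact hi (p.2 this).symm
    · exact ⟨h.1, Or.inl (Or.inr h)⟩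

/-! ### Substars -/

/-- The substar of vertices that agree with `c` at every position outside `T ∪ {z}`. -/
noncomputable def Cp (z : Fin k) (T : Finset (Fin k)) (c : NKVertex n k) : Finset (NKVertex n k) :=
  Finset.univ.filter fun p => ∀ j, j ≠ z → j ∉ T → p.1 j = c.1 j

/-- The symbols available at the free positions `T ∪ {z}` of the substar `Cp z T c`. -/
noncomputable def Al (z : Fin k) (T : Finset (Fin k)) (c : NKVertex n k) : Finset (Fin n) :=
  Finset.univ.filter fun a => ∀ j, j ≠ z → j ∉ T → c.1 j ≠ a

theorem mem_Cp {z : Fin k} {T : Finset (Fin k)} {c p : NKVertex n k} :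
    p ∈ Cp z T c ↔ ∀ j, j ≠ z → j ∉ T → p.1 j = c.1 j := by simp [Cp]

theorem mem_Al {z : Fin k} {T : Finset (Fin k)} {c : NKVertex n k} {a : Fin n} :
    a ∈ Al z T c ↔ ∀ j, j ≠ z → j ∉ T → c.1 j ≠ a := by simp [Al]

theorem card_Al {z : Fin k} {T : Finset (Fin k)} (hz : z ∉ T) (c : NKVertex n k) :
    (Al z T c).card + k = n + T.card + 1 := by
  have h1 : Al z T c = Finset.univ \ (Finset.univ \ insert z T).image c.1 := by
    ext a
    simp only [mem_Al, Finset.mem_sdiff, Finset.mem_univ, true_and, Finset.mem_image,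
      Finset.mem_insert, not_exists, not_and, not_or]
    exact ⟨fun h j hj => h j hj.1 hj.2, fun h j h1 h2 => h j ⟨h1, h2⟩⟩
  have h2 := Finset.card_sdiff_add_card_eq_card
    (Finset.subset_univ ((Finset.univ \ insert z T).image c.1))
  rw [← h1, Finset.card_image_of_injective _ c.2, Finset.card_univ, Fintype.card_fin] at h2
  have h3 := Finset.card_sdiff_add_card_eq_card (Finset.subset_univ (insert z T))
  rw [Finset.card_univ, Fintype.card_fin, Finset.card_insert_of_notMem hz] at h3
  omega

theorem Cp_self (z : Fin k) (T : Finset (Fin k)) (c : NKVertex n k) : c ∈ Cp z T c :=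
  mem_Cp.2 fun _ _ _ => rfl

theorem apply_mem_Al {z : Fin k} {T : Finset (Fin k)} {c p : NKVertex n k} (hp : p ∈ Cp z T c)
    {s : Fin k} (hs : s = z ∨ s ∈ T) : p.1 s ∈ Al z T c := by
  rw [mem_Al]
  intro j hj hjT h
  rw [← mem_Cp.1 hp j hj hjT] at h
  have := p.2 h
  subst this
  tauto

theorem rl_mem {z : Fin k} {T : Finset (Fin k)} {c p : NKVertex n k} (hp : p ∈ Cp z T c)
    {s : Fin k} (hs : s = z ∨ s ∈ T) {a : Fin n} (ha : a ∈ Al z T c) : rl p s a ∈ Cp z T c := by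
  rw [mem_Cp]
  intro j hj hjT
  have h1 := mem_Cp.1 hp j hj hjT
  rw [rl_ne, h1]
  · rintro rfl; tauto
  · rw [h1]; exact mem_Al.1 ha j hj hjT

theorem sw_mem {z : Fin k} {T : Finset (Fin k)} {c p : NKVertex n k} (hp : p ∈ Cp z T c)
    {t : Fin k} (ht : t ∈ T) : sw z p t ∈ Cp z T c := by
  rw [mem_Cp]
  intro j hj hjT
  rw [sw_ne _ hj (by rintro rfl; exact hjT ht)]
  exact mem_Cp.1 hp j hj hjT

theorem exists_one (z : Fin k) (T : Finset (Fin k)) (c : NKVertex n k) {a : Fin n}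
    (ha : a ∈ Al z T c) : ∃ p ∈ Cp z T c, p.1 z = a :=
  ⟨rl c z a, rl_mem (Cp_self z T c) (Or.inl rfl) ha, rl_self _ _ _⟩

theorem exists_two {z : Fin k} {T : Finset (Fin k)} (hz : z ∉ T) (c : NKVertex n k) {a b : Fin n}
    (ha : a ∈ Al z T c) (hb : b ∈ Al z T c) (hab : a ≠ b) {t : Fin k} (ht : t ∈ T) :
    ∃ p ∈ Cp z T c, p.1 t = b ∧ p.1 z = a := by
  obtain ⟨p, hp, hpa⟩ := exists_one z T c ha
  refine ⟨rl p t b, rl_mem hp (Or.inr ht) hb, rl_self _ _ _, ?_⟩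
  rw [rl_ne _ _ (by rwa [hpa]), hpa]
  rintro rfl; exact hz ht

theorem exists_three {z : Fin k} {T : Finset (Fin k)} (hz : z ∉ T) (c : NKVertex n k)
    {a b w : Fin n} (ha : a ∈ Al z T c) (hb : b ∈ Al z T c) (hw : w ∈ Al z T c) (hab : a ≠ b)
    (haw : a ≠ w) (hbw : b ≠ w) {t s : Fin k} (ht : t ∈ T) (hs : s ∈ T) (hts : t ≠ s) :
    ∃ p ∈ Cp z T c, p.1 t = b ∧ p.1 z = a ∧ p.1 s = w := by
  obtain ⟨p, hp, hpb, hpa⟩ := exists_two hz c ha hb hab ht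
  refine ⟨rl p s w, rl_mem hp (Or.inr hs) hw, ?_, ?_, rl_self _ _ _⟩
  · rw [rl_ne _ hts (by rwa [hpb]), hpb]
  · rw [rl_ne _ _ (by rwa [hpa]), hpa]
    rintro rfl; exact hz hs

theorem card_clique_le (z : Fin k) (c : NKVertex n k) : n + 1 ≤ (Cp z ∅ c).card + k := by
  have h1 := card_Al (Finset.notMem_empty z) c
  have h2 : (Al z ∅ c).card ≤ (Cp z ∅ c).card := by
    apply Finset.card_le_card_of_surjOn (fun p => p.1 z)
    intro a ha
    obtain ⟨p, hp, hpa⟩ := exists_one z ∅ c ha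
    exact ⟨p, hp, hpa⟩
  simp at h1
  omega

theorem clique_ext {z : Fin k} {c p q : NKVertex n k} (hp : p ∈ Cp z ∅ c) (hq : q ∈ Cp z ∅ c)
    (h : p.1 z = q.1 z) : p = q := by
  apply NKVertex.ext'
  intro j
  by_cases hj : j = z
  · rw [hj, h]
  · rw [mem_Cp.1 hp j hj (by simp), mem_Cp.1 hq j hj (by simp)]

/-! ### Counting along the matching at one position -/

/-- For a position `t ∈ T`, the edges `p — sw z p t` form a perfect matching of the substar. If
each such edge from symbol class `P` to symbol class `Q` meets `S`, then `S` is at least as large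
as the number of these edges; `w` is a lower bound for their number per pair of symbols. -/
theorem match_card {z : Fin k} {T : Finset (Fin k)} (c : NKVertex n k)
    {t : Fin k} {P Q : Finset (Fin n)}
    (hPQ : Disjoint P Q) {S : Finset (NKVertex n k)}
    (hcov : ∀ p ∈ Cp z T c, p.1 t ∈ P → p.1 z ∈ Q → p ∈ S ∨ sw z p t ∈ S) {w : ℕ}
    (hw : ∀ b ∈ P, ∀ a ∈ Q, w ≤ ((Cp z T c).filter fun p => p.1 t = b ∧ p.1 z = a).card) :
    P.card * Q.card * w ≤ S.card := by
  set E := (Cp z T c).filter fun p => p.1 t ∈ P ∧ p.1 z ∈ Q with hE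
  have h1 : E.card ≤ S.card := by
    apply Finset.card_le_card_of_injOn (fun p => if p ∈ S then p else sw z p t)
    · intro p hp
      simp only [hE, Finset.coe_filter, Set.mem_ofPred_eq] at hp
      have := hcov p hp.1 hp.2.1 hp.2.2
      simp only [Finset.mem_coe]
      split_ifs with h
      · exact h
      · tauto
    · intro p hp q hq h
      simp only [hE, Finset.coe_filter, Set.mem_ofPred_eq] at hp hq
      simp only at h
      have key : ∀ p q : NKVertex n k, p.1 t ∈ P → q.1 z ∈ Q → p ≠ sw z q t := by
        rintro p q hp hq rfl
        rw [sw_i] at hp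
        exact Finset.disjoint_left.1 hPQ hp hq
      split_ifs at h with h1 h2 h2
      · exact h
      · exact absurd h (key _ _ hp.2.1 hq.2.2)
      · exact absurd h.symm (key _ _ hq.2.1 hp.2.2)
      · exact sw_inj h
  refine le_trans ?_ h1
  have h2 : E.card = ∑ x ∈ P ×ˢ Q, (E.filter fun p => (p.1 t, p.1 z) = x).card := by
    apply Finset.card_eq_sum_card_fiberwise
    intro p hp
    simp only [hE, Finset.coe_filter, Set.mem_ofPred_eq] at hp
    simpa using hp.2
  rw [h2, ← Finset.card_product, ← smul_eq_mul]
  apply Finset.card_nsmul_le_sum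
  rintro ⟨b, a⟩ hx
  rw [Finset.mem_product] at hx
  refine le_trans (hw b hx.1 a hx.2) (Finset.card_le_card ?_)
  intro p hp
  simp only [Finset.mem_filter, Prod.mk.injEq, hE] at hp ⊢
  refine ⟨⟨hp.1, ?_, ?_⟩, hp.2⟩
  · rw [hp.2.1]; exact hx.1
  · rw [hp.2.2]; exact hx.2

/-- The count of `match_card` in numbers: with at least two free positions (`1 ≤ M`) it gives
`(r + M) ^ 2`, and up to one available symbol may be missing from `P ∪ Q`. -/
theorem mat_bound {z : Fin k} {T : Finset (Fin k)} (hz : z ∉ T) (c : NKVertex n k) {r M h : ℕ}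
    (hn : n = k + r) (hr : 1 ≤ r) (hM : T.card = M + 1) (hh : h ≤ r)
    {t : Fin k} (ht : t ∈ T) {P Q : Finset (Fin n)} (hP : P ⊆ Al z T c) (hQ : Q ⊆ Al z T c)
    (hPQ : Disjoint P Q) (hPn : P.Nonempty) (hQn : Q.Nonempty)
    (hc : (Al z T c).card ≤ P.card + Q.card ∨ (1 ≤ M ∧ (Al z T c).card ≤ P.card + Q.card + 1))
    {S : Finset (NKVertex n k)}
    (hcov : ∀ p ∈ Cp z T c, p.1 t ∈ P → p.1 z ∈ Q → p ∈ S ∨ sw z p t ∈ S) :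
    r + (M + 1) + h * M ≤ S.card := by
  have hA := card_Al hz c
  have hPn := hPn.card_pos
  have hQn := hQn.card_pos
  have hne : ∀ b ∈ P, ∀ a ∈ Q, a ≠ b := fun b hb a ha h =>
    Finset.disjoint_left.1 hPQ hb (h ▸ ha)
  obtain ⟨a, ha⟩ : ∃ a, P.card = a + 1 := ⟨P.card - 1, by omega⟩
  obtain ⟨b, hb⟩ : ∃ b, Q.card = b + 1 := ⟨Q.card - 1, by omega⟩
  rcases Nat.eq_zero_or_pos M with hM0 | hM0
  · have := match_card c hPQ hcov (w := 1) (by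
      intro b hb a ha
      obtain ⟨p, hp, h1⟩ := exists_two hz c (hQ ha) (hP hb) (hne b hb a ha) ht
      exact Finset.card_pos.2 ⟨p, Finset.mem_filter.2 ⟨hp, h1⟩⟩)
    subst hM0
    rw [ha, hb] at this
    have h3 : r ≤ a + b := by omega
    nlinarith [Nat.zero_le (a * b)]
  · obtain ⟨s, hs⟩ : (T.erase t).Nonempty := by
      rw [← Finset.card_pos, Finset.card_erase_of_mem ht]; omega
    rw [Finset.mem_erase] at hs
    have := match_card c hPQ hcov (w := r + M) (by
      intro b hb a ha
      have h1 : r + M ≤ (((Al z T c).erase b).erase a).card := by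
        rw [Finset.card_erase_of_mem, Finset.card_erase_of_mem (hP hb)]
        · omega
        · exact Finset.mem_erase.2 ⟨hne b hb a ha, hQ ha⟩
      refine le_trans h1 (Finset.card_le_card_of_surjOn (fun p => p.1 s) ?_)
      intro w hw
      simp only [Finset.coe_erase, Set.mem_sdiff, Finset.mem_coe, Set.mem_singleton_iff] at hw
      obtain ⟨p, hp, h1, h2, h3⟩ := exists_three hz c (hQ ha) (hP hb) hw.1.1 (hne b hb a ha)
        (Ne.symm hw.2) (Ne.symm hw.1.2) ht hs.2 hs.1.symm
      exact ⟨p, by simp [hp, h1, h2], h3⟩)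
    have h3 : r + M ≤ a + b + 1 := by omega
    have h4 : r + M ≤ (a + 1) * (b + 1) := by nlinarith [Nat.zero_le (a * b)]
    rw [ha, hb] at this
    have h5 : (r + M) * (r + M) ≤ S.card := le_trans (Nat.mul_le_mul_right _ h4) this
    have h6 : h * M ≤ r * M := Nat.mul_le_mul_right _ hh
    nlinarith

/-! ### Separations of a substar -/

/-- `S` separates the nonempty sets `X` and `Y` inside the substar `Cp z T c`, and all internal
degrees of `X` and of `Y` are at least `h`. -/
structure StarSep (z : Fin k) (T : Finset (Fin k)) (c : NKVertex n k) (h : ℕ)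
    (X Y S : Finset (NKVertex n k)) : Prop where
  hX : X ⊆ Cp z T c
  hY : Y ⊆ Cp z T c
  neX : X.Nonempty
  neY : Y.Nonempty
  sep : ∀ x ∈ X, ∀ y ∈ Y, x ≠ y ∧ ¬ (nkStar n k).Adj x y
  cov : ∀ p ∈ Cp z T c, p ∉ X → p ∉ Y → p ∈ S
  dX : ∀ x ∈ X, h ≤ (X.filter fun q => (nkStar n k).Adj x q).card
  dY : ∀ x ∈ Y, h ≤ (Y.filter fun q => (nkStar n k).Adj x q).card

theorem StarSep.symm {z : Fin k} {T : Finset (Fin k)} {c : NKVertex n k} {h : ℕ}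
    {X Y S : Finset (NKVertex n k)} (H : StarSep z T c h X Y S) : StarSep z T c h Y X S :=
  ⟨H.hY, H.hX, H.neY, H.neX, fun x hx y hy =>
    ⟨(H.sep y hy x hx).1.symm, fun ha => (H.sep y hy x hx).2 ha.symm⟩,
    fun p hp h1 h2 => H.cov p hp h2 h1, H.dY, H.dX⟩

theorem adj_sw {z : Fin k} (hz0 : (z : ℕ) = 0) (p : NKVertex n k) {t : Fin k} (ht : t ≠ z) :
    (nkStar n k).Adj p (sw z p t) :=
  (adj_iff hz0 _ _).2 (Or.inl ⟨t, ht, rfl⟩)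

/-- If one side of a separation lies in a single clique, its neighbourhood is already large
enough: `y` vertices of the clique have `r + 1 - y` further neighbours in the clique and
`y * (M + 1)` distinct swap-neighbours. -/
theorem clique_bound {z : Fin k} (hz0 : (z : ℕ) = 0) {T : Finset (Fin k)} (hz : z ∉ T)
    {c : NKVertex n k} {r M h : ℕ} (hn : n = k + r) (hM : T.card = M + 1)
    {X Y S : Finset (NKVertex n k)} (H : StarSep z T c h X Y S) {y₀ : NKVertex n k} (hy₀ : y₀ ∈ Y)
    (hcl : Y ⊆ Cp z ∅ y₀) : r + (M + 1) + h * M ≤ S.card := by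
  have hne : ∀ t ∈ T, t ≠ z := fun t ht h => hz (h ▸ ht)
  have hcard := card_clique_le z y₀
  have hYc : h + 1 ≤ Y.card := by
    have h1 := H.dY y₀ hy₀
    have h2 : (Y.filter fun q => (nkStar n k).Adj y₀ q) ⊆ Y.erase y₀ := by
      intro q hq
      rw [Finset.mem_filter] at hq
      exact Finset.mem_erase.2 ⟨hq.2.ne', hq.1⟩
    have h3 := Finset.card_le_card h2
    rw [Finset.card_erase_of_mem hy₀] at h3
    have := Finset.card_pos.2 H.neY
    omega
  set R := Cp z ∅ y₀ \ Y with hR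
  set I := (Y ×ˢ T).image fun x => sw z x.1 x.2 with hI
  have hRc : R.card + Y.card = (Cp z ∅ y₀).card := Finset.card_sdiff_add_card_eq_card hcl
  have hyT : ∀ y ∈ Y, ∀ j, j ≠ z → y.1 j = y₀.1 j := fun y hy j hj =>
    mem_Cp.1 (hcl hy) j hj (by simp)
  have hIc : I.card = Y.card * T.card := by
    rw [hI, Finset.card_image_of_injOn, Finset.card_product]
    rintro ⟨p, t⟩ hp ⟨q, s⟩ hq heq
    simp only [Finset.coe_product, Set.mem_prod, Finset.mem_coe] at hp hq heq
    have h1 := congrArg (fun v : NKVertex n k => v.1 z) heq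
    simp only [sw_z, hyT p hp.1 t (hne t hp.2), hyT q hq.1 s (hne s hq.2)] at h1
    have h2 := y₀.2 h1
    subst h2
    rw [sw_inj heq]
  have hIcl : ∀ v ∈ I, v ∉ Cp z ∅ y₀ := by
    intro v hv hv2
    obtain ⟨⟨p, t⟩, hp, rfl⟩ := Finset.mem_image.1 hv
    rw [Finset.mem_product] at hp
    have h1 := mem_Cp.1 hv2 t (hne t hp.2) (by simp)
    rw [sw_i, ← hyT p hp.1 t (hne t hp.2)] at h1
    exact hne t hp.2 (p.2 h1).symm
  have hdis : Disjoint R I := by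
    rw [Finset.disjoint_left]
    intro v hv hv2
    exact hIcl v hv2 (Finset.mem_sdiff.1 hv).1
  have hsub : R ∪ I ⊆ S := by
    intro v hv
    rcases Finset.mem_union.1 hv with hv | hv
    · rw [hR, Finset.mem_sdiff] at hv
      apply H.cov _ _ _ hv.2
      · rw [mem_Cp]
        intro j hj hjT
        rw [mem_Cp.1 hv.1 j hj (by simp)]
        exact mem_Cp.1 (H.hY hy₀) j hj hjT
      · intro hvX
        refine (H.sep v hvX y₀ hy₀).2 ((adj_iff hz0 _ _).2 (Or.inr ⟨?_, ?_⟩))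
        · rintro rfl; exact hv.2 hy₀
        · intro j hj; exact (mem_Cp.1 hv.1 j hj (by simp)).symm
    · have hvc := hIcl v hv
      obtain ⟨⟨p, t⟩, hp, rfl⟩ := Finset.mem_image.1 hv
      rw [Finset.mem_product] at hp
      refine H.cov _ (sw_mem (H.hY hp.1) hp.2) ?_ (fun h => hvc (hcl h))
      intro hX
      exact (H.sep _ hX p hp.1).2 (adj_sw hz0 p (hne t hp.2)).symm
  have h1 := Finset.card_le_card hsub
  rw [Finset.card_union_of_disjoint hdis, hIc, hM] at h1
  have h2 : (h + 1) * M ≤ Y.card * M := Nat.mul_le_mul_right _ hYc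
  nlinarith

/-- Restriction of a separation to a copy `p t = i` meeting both sides: each vertex has only one
neighbour outside the copy, so the internal degrees drop by at most one. -/
theorem StarSep.restrict {z : Fin k} (hz0 : (z : ℕ) = 0) {T : Finset (Fin k)}
    {c : NKVertex n k} {h : ℕ} {X Y S : Finset (NKVertex n k)}
    (H : StarSep z T c h X Y S) {t : Fin k} (htz : t ≠ z) {x₀ y₀ : NKVertex n k}
    (hx₀ : x₀ ∈ X) (hy₀ : y₀ ∈ Y) (hxy : y₀.1 t = x₀.1 t) :
    StarSep z (T.erase t) x₀ (h - 1) (X.filter fun p => p.1 t = x₀.1 t)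
      (Y.filter fun p => p.1 t = x₀.1 t) (S.filter fun p => p.1 t = x₀.1 t) := by
  have hmem : ∀ p, p ∈ Cp z (T.erase t) x₀ ↔ p ∈ Cp z T c ∧ p.1 t = x₀.1 t := by
    intro p
    have hx := mem_Cp.1 (H.hX hx₀)
    simp only [mem_Cp, Finset.mem_erase, not_and]
    constructor
    · intro h
      exact ⟨fun j hj hjT => by rw [h j hj (fun _ => hjT), hx j hj hjT],
        h t htz (fun h => absurd rfl h)⟩
    · rintro ⟨h1, h2⟩ j hj hjT
      by_cases hjt : j = t
      · rw [hjt, h2]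
      · rw [h1 j hj (hjT hjt), hx j hj (hjT hjt)]
  have hdeg : ∀ Z : Finset (NKVertex n k), ∀ p : NKVertex n k, p.1 t = x₀.1 t →
      h ≤ (Z.filter fun q => (nkStar n k).Adj p q).card →
      h - 1 ≤ ((Z.filter fun p => p.1 t = x₀.1 t).filter
        fun q => (nkStar n k).Adj p q).card := by
    intro Z p hp hd
    have h1 : (Z.filter fun q => (nkStar n k).Adj p q) ⊆
        insert (sw z p t) ((Z.filter fun p => p.1 t = x₀.1 t).filter
          fun q => (nkStar n k).Adj p q) := by
      intro q hq
      rw [Finset.mem_filter] at hq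
      rw [Finset.mem_insert, Finset.mem_filter, Finset.mem_filter]
      rcases (adj_iff hz0 _ _).1 hq.2 with ⟨i, hi, rfl⟩ | h2
      · by_cases hit : i = t
        · left; rw [hit]
        · right
          exact ⟨⟨hq.1, by rw [sw_ne _ htz (Ne.symm hit), hp]⟩, hq.2⟩
      · right
        exact ⟨⟨hq.1, by rw [h2.2 t htz, hp]⟩, hq.2⟩
    have h2 := (Finset.card_le_card h1).trans (Finset.card_insert_le _ _)
    omega
  refine ⟨?_, ?_, ⟨x₀, by simp [hx₀]⟩, ⟨y₀, by simp [hy₀, hxy]⟩, ?_, ?_, ?_, ?_⟩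
  · intro p hp
    rw [Finset.mem_filter] at hp
    exact (hmem p).2 ⟨H.hX hp.1, hp.2⟩
  · intro p hp
    rw [Finset.mem_filter] at hp
    exact (hmem p).2 ⟨H.hY hp.1, hp.2⟩
  · intro x hx y hy
    exact H.sep x (Finset.mem_filter.1 hx).1 y (Finset.mem_filter.1 hy).1
  · intro p hp h1 h2
    rw [hmem] at hp
    simp only [Finset.mem_filter, hp.2, and_true] at h1 h2 ⊢
    exact H.cov p hp.1 h1 h2
  · intro x hx
    rw [Finset.mem_filter] at hx
    exact hdeg X x hx.2 (H.dX x hx.1)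
  · intro x hx
    rw [Finset.mem_filter] at hx
    exact hdeg Y x hx.2 (H.dY x hx.1)

/-- The hypotheses `hM1` and `h2` deal with copies meeting both sides: there are none when `M = 0`,
and two of them already give the bound. Then either the bound holds, or, cutting the substar into copies according to the entry at `t`, one
of the two sides lies in a single copy while the other one meets all copies. -/
theorem pos_cases {z : Fin k} (hz0 : (z : ℕ) = 0) {T : Finset (Fin k)} (hz : z ∉ T)
    {c : NKVertex n k} {r M h : ℕ} (hn : n = k + r) (hr : 1 ≤ r) (hM : T.card = M + 1) (hh : h ≤ r)
    {X Y S : Finset (NKVertex n k)} (H : StarSep z T c h X Y S) {t : Fin k} (ht : t ∈ T)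
    (hM1 : ∀ x ∈ X, ∀ y ∈ Y, x.1 t = y.1 t → 1 ≤ M)
    (h2 : ∀ x ∈ X, ∀ y ∈ Y, x.1 t = y.1 t → ∀ x' ∈ X, ∀ y' ∈ Y, x'.1 t = y'.1 t →
      x.1 t ≠ x'.1 t → r + (M + 1) + h * M ≤ S.card) :
    r + (M + 1) + h * M ≤ S.card ∨
    ((∃ i, ∀ y ∈ Y, y.1 t = i) ∧ ∀ j ∈ Al z T c, ∃ x ∈ X, x.1 t = j) ∨
    ((∃ i, ∀ y ∈ X, y.1 t = i) ∧ ∀ j ∈ Al z T c, ∃ x ∈ Y, x.1 t = j) := by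
  by_cases hB : r + (M + 1) + h * M ≤ S.card
  · exact Or.inl hB
  right
  have htz : t ≠ z := fun h => hz (h ▸ ht)
  have hA := card_Al hz c
  have f0 : ∀ i ∈ Al z T c, (∃ x ∈ X, x.1 t = i) ∨ ∃ y ∈ Y, y.1 t = i := by
    intro i hi
    by_contra hcon
    push Not at hcon
    apply hB
    have hc1 : ((Al z T c).erase i).card = (Al z T c).card - 1 := Finset.card_erase_of_mem hi
    refine mat_bound hz c hn hr hM hh ht (P := {i}) (Q := (Al z T c).erase i) (by simpa using hi)
      (Finset.erase_subset _ _) (by simp) (by simp) (by rw [← Finset.card_pos]; omega)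
      (Or.inl (by rw [Finset.card_singleton]; omega)) ?_
    intro p hp h1 _
    rw [Finset.mem_singleton] at h1
    left
    exact H.cov p hp (fun h => hcon.1 p h h1) (fun h => hcon.2 p h h1)
  set JX := (Al z T c).filter fun i => ¬ ∃ y ∈ Y, y.1 t = i with hJX
  set JY := (Al z T c).filter fun i => ¬ ∃ x ∈ X, x.1 t = i with hJY
  set D := (Al z T c).filter fun i => (∃ x ∈ X, x.1 t = i) ∧ ∃ y ∈ Y, y.1 t = i with hD
  have hcard : (Al z T c).card ≤ JX.card + JY.card + D.card := by
    have : Al z T c ⊆ (JX ∪ JY) ∪ D := by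
      intro i hi
      simp only [hJX, hJY, hD, Finset.mem_union, Finset.mem_filter, hi, true_and]
      tauto
    refine (Finset.card_le_card this).trans ((Finset.card_union_le _ _).trans ?_)
    have := Finset.card_union_le JX JY
    omega
  have hD1 : D.card ≤ 1 := by
    rw [Finset.card_le_one]
    intro i hi j hj
    simp only [hD, Finset.mem_filter] at hi hj
    obtain ⟨-, ⟨x, hx, rfl⟩, y, hy, hyx⟩ := hi
    obtain ⟨-, ⟨x', hx', rfl⟩, y', hy', hyx'⟩ := hj
    by_contra hne
    exact hB (h2 x hx y hy hyx.symm x' hx' y' hy' hyx'.symm hne)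
  have hDM : D.card = 0 ∨ 1 ≤ M := by
    rcases D.eq_empty_or_nonempty with h0 | ⟨i, hi⟩
    · left; rw [h0]; rfl
    · right
      simp only [hD, Finset.mem_filter] at hi
      obtain ⟨-, ⟨x, hx, rfl⟩, y, hy, hyx⟩ := hi
      exact hM1 x hx y hy hyx.symm
  have hor : JX = ∅ ∨ JY = ∅ := by
    by_contra hcon
    push Not at hcon
    apply hB
    refine mat_bound hz c hn hr hM hh ht (P := JX) (Q := JY) (Finset.filter_subset _ _)
      (Finset.filter_subset _ _) ?_ hcon.1
      hcon.2 (by omega) ?_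
    · rw [Finset.disjoint_left]
      intro i h1 h2
      simp only [hJX, hJY, Finset.mem_filter] at h1 h2
      rcases f0 i h1.1 with h | h
      · exact h2.2 h
      · exact h1.2 h
    · intro p hp h1 h2
      by_contra hcon
      push Not at hcon
      simp only [hJX, hJY, Finset.mem_filter] at h1 h2
      have e1 : p ∈ X := by
        by_contra hpX
        exact hcon.1 (H.cov p hp hpX fun h => h1.2 ⟨p, h, rfl⟩)
      have e2 : sw z p t ∈ Y := by
        by_contra hpY
        exact hcon.2 (H.cov _ (sw_mem hp ht) (fun h => h2.2 ⟨_, h, sw_i z p t⟩) hpY)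
      exact (H.sep _ e1 _ e2).2 (adj_sw hz0 p htz)
  have hDmem : ∀ i ∈ Al z T c, (∃ x ∈ X, x.1 t = i) → (∃ y ∈ Y, y.1 t = i) → i ∈ D := by
    intro i hi h1 h2
    exact Finset.mem_filter.2 ⟨hi, h1, h2⟩
  rw [Finset.card_le_one] at hD1
  rcases hor with h0 | h0
  · right
    have hall : ∀ j ∈ Al z T c, ∃ x ∈ Y, x.1 t = j := by
      intro j hj
      by_contra hcon
      have : j ∈ JX := Finset.mem_filter.2 ⟨hj, hcon⟩
      rw [h0] at this
      simp at this
    refine ⟨?_, hall⟩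
    obtain ⟨x₀, hx₀⟩ := H.neX
    have key : ∀ x ∈ X, x.1 t ∈ D := fun x hx =>
      hDmem _ (apply_mem_Al (H.hX hx) (Or.inr ht)) ⟨x, hx, rfl⟩
        (hall _ (apply_mem_Al (H.hX hx) (Or.inr ht)))
    exact ⟨x₀.1 t, fun x hx => hD1 _ (key x hx) _ (key x₀ hx₀)⟩
  · left
    have hall : ∀ j ∈ Al z T c, ∃ x ∈ X, x.1 t = j := by
      intro j hj
      by_contra hcon
      have : j ∈ JY := Finset.mem_filter.2 ⟨hj, hcon⟩
      rw [h0] at this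
      simp at this
    refine ⟨?_, hall⟩
    obtain ⟨x₀, hx₀⟩ := H.neY
    have key : ∀ x ∈ Y, x.1 t ∈ D := fun x hx =>
      hDmem _ (apply_mem_Al (H.hY hx) (Or.inr ht))
        (hall _ (apply_mem_Al (H.hY hx) (Or.inr ht))) ⟨x, hx, rfl⟩
    exact ⟨x₀.1 t, fun x hx => hD1 _ (key x hx) _ (key x₀ hx₀)⟩

/-- If at some position `t₀` the side `Y` lies in one copy and `X` meets all copies, then the same
happens at every position of `T` (the roles of `X` and `Y` cannot be exchanged elsewhere), so `Y`
lies in a clique. -/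
theorem bound_of_pos {z : Fin k} (hz0 : (z : ℕ) = 0) {T : Finset (Fin k)} (hz : z ∉ T)
    {c : NKVertex n k} {r M h : ℕ} (hn : n = k + r) (hM : T.card = M + 1)
    {X Y S : Finset (NKVertex n k)} (H : StarSep z T c h X Y S)
    (hall : ∀ t ∈ T,
      ((∃ i, ∀ y ∈ Y, y.1 t = i) ∧ ∀ j ∈ Al z T c, ∃ x ∈ X, x.1 t = j) ∨
      ((∃ i, ∀ y ∈ X, y.1 t = i) ∧ ∀ j ∈ Al z T c, ∃ x ∈ Y, x.1 t = j))
    {t₀ : Fin k}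
    (h0 : (∃ i, ∀ y ∈ Y, y.1 t₀ = i) ∧ ∀ j ∈ Al z T c, ∃ x ∈ X, x.1 t₀ = j) :
    r + (M + 1) + h * M ≤ S.card := by
  have key : ∀ t ∈ T, ∃ i, ∀ y ∈ Y, y.1 t = i := by
    intro t ht
    rcases hall t ht with h1 | ⟨⟨d, hd⟩, -⟩
    · exact h1.1
    · by_cases htt : t = t₀
      · rw [htt]; exact h0.1
      · exfalso
        obtain ⟨x, hx⟩ := H.neX
        have hdA : d ∈ Al z T c := by
          rw [← hd x hx]; exact apply_mem_Al (H.hX hx) (Or.inr ht)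
        obtain ⟨x', hx', hx'd⟩ := h0.2 d hdA
        have := hd x' hx'
        rw [← hx'd] at this
        exact htt (x'.2 this)
  obtain ⟨y₀, hy₀⟩ := H.neY
  refine clique_bound hz0 hz hn hM H hy₀ ?_
  intro y hy
  rw [mem_Cp]
  intro j hj _
  by_cases hjT : j ∈ T
  · obtain ⟨i, hi⟩ := key j hjT
    rw [hi y hy, hi y₀ hy₀]
  · rw [mem_Cp.1 (H.hY hy) j hj hjT, mem_Cp.1 (H.hY hy₀) j hj hjT]

theorem sep_bound {z : Fin k} (hz0 : (z : ℕ) = 0) {r : ℕ} (hn : n = k + r) (hr : 1 ≤ r) (M : ℕ) :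
    ∀ (T : Finset (Fin k)), z ∉ T → T.card = M + 1 → ∀ (c : NKVertex n k) (h : ℕ), h ≤ r →
    ∀ X Y S : Finset (NKVertex n k), StarSep z T c h X Y S → r + (M + 1) + h * M ≤ S.card := by
  induction M with
  | zero =>
    intro T hz hM c h hh X Y S H
    obtain ⟨t, rfl⟩ := Finset.card_eq_one.1 hM
    -- With a single free position the copies are cliques, so no copy meets both `X` and `Y`.
    have hno : ∀ x ∈ X, ∀ y ∈ Y, x.1 t ≠ y.1 t := by
      intro x hx y hy hxy
      obtain ⟨h1, h2⟩ := H.sep x hx y hy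
      apply h2
      rw [adj_iff hz0]
      refine Or.inr ⟨h1, fun j hj => ?_⟩
      by_cases hjt : j = t
      · rw [hjt, hxy]
      · rw [mem_Cp.1 (H.hX hx) j hj (by simpa using hjt),
          mem_Cp.1 (H.hY hy) j hj (by simpa using hjt)]
    have ht : t ∈ ({t} : Finset (Fin k)) := by simp
    have hp := pos_cases hz0 hz hn hr hM hh H ht
      (fun x hx y hy e => absurd e (hno x hx y hy))
      (fun x hx y hy e => absurd e (hno x hx y hy))
    rcases hp with hp | hp | hp
    · exact hp
    · exact bound_of_pos hz0 hz hn hM H (fun s hs => by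
        rw [Finset.mem_singleton] at hs; subst hs; exact Or.inl hp) hp
    · exact bound_of_pos hz0 hz hn hM H.symm (fun s hs => by
        rw [Finset.mem_singleton] at hs; subst hs; exact Or.inl hp) hp
  | succ M ih =>
    intro T hz hM c h hh X Y S H
    by_cases hB : r + (M + 1 + 1) + h * (M + 1) ≤ S.card
    · exact hB
    have hall : ∀ t ∈ T,
        ((∃ i, ∀ y ∈ Y, y.1 t = i) ∧ ∀ j ∈ Al z T c, ∃ x ∈ X, x.1 t = j) ∨
        ((∃ i, ∀ y ∈ X, y.1 t = i) ∧ ∀ j ∈ Al z T c, ∃ x ∈ Y, x.1 t = j) := by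
      intro t ht
      have htz : t ≠ z := fun h => hz (h ▸ ht)
      refine (pos_cases hz0 hz hn hr hM hh H ht (fun _ _ _ _ _ => by omega) ?_).resolve_left hB
      intro x hx y hy hxy x' hx' y' hy' hxy' hne
      have hcT : (T.erase t).card = M + 1 := by
        rw [Finset.card_erase_of_mem ht]; omega
      have hzT : z ∉ T.erase t := fun h => hz (Finset.mem_of_mem_erase h)
      have b1 := ih _ hzT hcT _ (h - 1) (by omega) _ _ _
        (H.restrict hz0 htz hx hy hxy.symm)
      have b2 := ih _ hzT hcT _ (h - 1) (by omega) _ _ _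
        (H.restrict hz0 htz hx' hy' hxy'.symm)
      have hdis : Disjoint (S.filter fun p => p.1 t = x.1 t)
          (S.filter fun p => p.1 t = x'.1 t) := by
        rw [Finset.disjoint_left]
        intro p h1 h2
        rw [Finset.mem_filter] at h1 h2
        exact hne (h1.2.symm.trans h2.2)
      have b3 : (S.filter fun p => p.1 t = x.1 t).card +
          (S.filter fun p => p.1 t = x'.1 t).card ≤ S.card := by
        rw [← Finset.card_union_of_disjoint hdis]
        exact Finset.card_le_card
          (Finset.union_subset (Finset.filter_subset _ _) (Finset.filter_subset _ _))
      rcases h with _ | g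
      · simp at b1 b2 ⊢; omega
      · simp only [Nat.add_sub_cancel] at b1 b2
        nlinarith [Nat.zero_le (g * M)]
    obtain ⟨t, ht⟩ : T.Nonempty := by rw [← Finset.card_pos]; omega
    rcases hall t ht with hp | hp
    · exact bound_of_pos hz0 hz hn hM H hall hp
    · exact bound_of_pos hz0 hz hn hM H.symm (fun s hs => (hall s hs).symm) hp

theorem cut_lower {z : Fin k} (hz0 : (z : ℕ) = 0) {r h : ℕ} (hk : 2 ≤ k) (hn : n = k + r)
    (hr : 1 ≤ r) (hh : h ≤ r) {S : Set (NKVertex n k)} (hS : IsHSuperCut (nkStar n k) h S) :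
    r + (k - 1) + h * (k - 2) ≤ S.ncard := by
  obtain ⟨hcon, hdeg⟩ := hS
  set T : Finset (Fin k) := Finset.univ.erase z with hT
  have hz : z ∉ T := by simp [hT]
  have hTc : T.card = (k - 2) + 1 := by
    rw [hT, Finset.card_erase_of_mem (Finset.mem_univ _), Finset.card_univ, Fintype.card_fin]
    omega
  let c : NKVertex n k := ⟨Fin.castLE (by omega), Fin.castLE_injective _⟩
  have hU : ∀ p : NKVertex n k, p ∈ Cp z T c := by
    intro p
    rw [mem_Cp]
    intro j hj hjT
    simp [hT, hj] at hjT
  have hncard : S.ncard = S.toFinset.card := Set.ncard_eq_toFinset_card' S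
  have hk1 : k - 1 = k - 2 + 1 := by omega
  rw [hncard, hk1]
  by_cases hne : Nonempty ↥(Sᶜ)
  · have hpre : ¬ ((nkStar n k).induce Sᶜ).Preconnected := fun hp =>
      hcon ⟨hp⟩
    simp only [SimpleGraph.Preconnected, not_forall] at hpre
    obtain ⟨u, v, huv⟩ := hpre
    let G := (nkStar n k).induce Sᶜ
    let X : Finset (NKVertex n k) :=
      Finset.univ.filter fun w => ∃ hw : w ∈ Sᶜ, G.Reachable u ⟨w, hw⟩
    let Y : Finset (NKVertex n k) :=
      Finset.univ.filter fun w => ∃ hw : w ∈ Sᶜ, ¬ G.Reachable u ⟨w, hw⟩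
    have mX : ∀ w, w ∈ X ↔ ∃ hw : w ∈ Sᶜ, G.Reachable u ⟨w, hw⟩ := fun w => by simp [X]
    have mY : ∀ w, w ∈ Y ↔ ∃ hw : w ∈ Sᶜ, ¬ G.Reachable u ⟨w, hw⟩ := fun w => by simp [Y]
    have hadj : ∀ (x y : NKVertex n k) (hx : x ∈ Sᶜ) (hy : y ∈ Sᶜ), (nkStar n k).Adj x y →
        (G.Reachable u ⟨x, hx⟩ ↔ G.Reachable u ⟨y, hy⟩) := by
      intro x y hx hy hxy
      have e : G.Adj ⟨x, hx⟩ ⟨y, hy⟩ := hxy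
      exact ⟨fun h => h.trans e.reachable, fun h => h.trans e.symm.reachable⟩
    have hd : ∀ Z : Finset (NKVertex n k), ∀ x, x ∈ Sᶜ →
        (∀ y ∈ Sᶜ, (nkStar n k).Adj x y → y ∈ Z) →
        h ≤ (Z.filter fun q => (nkStar n k).Adj x q).card := by
      intro Z x hx hZ
      refine (hdeg x hx).trans ?_
      rw [← Set.ncard_coe_finset]
      apply Set.ncard_le_ncard _ (Finset.finite_toSet _)
      rintro y ⟨h1, h2⟩
      simp only [Finset.coe_filter, Set.mem_ofPred_eq]
      exact ⟨hZ y h2 h1, h1⟩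
    refine sep_bound hz0 hn hr (k - 2) T hz hTc c h hh X Y S.toFinset ?_
    refine ⟨fun p _ => hU p, fun p _ => hU p, ⟨u, (mX _).2 ⟨u.2, SimpleGraph.Reachable.refl _⟩⟩,
      ⟨v, (mY _).2 ⟨v.2, huv⟩⟩, ?_, ?_, ?_, ?_⟩
    · intro x hx y hy
      obtain ⟨hx1, hx2⟩ := (mX x).1 hx
      obtain ⟨hy1, hy2⟩ := (mY y).1 hy
      refine ⟨?_, fun h => hy2 ((hadj x y hx1 hy1 h).1 hx2)⟩
      rintro rfl
      exact hy2 hx2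
    · intro p _ h1 h2
      by_contra hpS
      rw [Set.mem_toFinset] at hpS
      by_cases hR : G.Reachable u ⟨p, hpS⟩
      · exact h1 ((mX p).2 ⟨hpS, hR⟩)
      · exact h2 ((mY p).2 ⟨hpS, hR⟩)
    · intro x hx
      obtain ⟨hx1, hx2⟩ := (mX x).1 hx
      exact hd X x hx1 fun y hy hxy => (mX y).2 ⟨hy, (hadj x y hx1 hy hxy).1 hx2⟩
    · intro x hx
      obtain ⟨hx1, hx2⟩ := (mY x).1 hx
      exact hd Y x hx1 fun y hy hxy => (mY y).2 ⟨hy, fun h => hx2 ((hadj x y hx1 hy hxy).2 h)⟩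
  · -- The empty graph counts as disconnected, so `S` may be the whole vertex set.
    have hall : ∀ p : NKVertex n k, p ∈ S := by
      intro p
      by_contra hp
      exact hne ⟨⟨p, hp⟩⟩
    obtain ⟨t, ht⟩ : T.Nonempty := by rw [← Finset.card_pos]; omega
    have hA := card_Al hz c
    have hi := apply_mem_Al (hU c) (Or.inl rfl : z = z ∨ z ∈ T)
    have hc1 := Finset.card_erase_of_mem hi
    refine mat_bound hz c hn hr hTc hh ht (P := {c.1 z}) (Q := (Al z T c).erase (c.1 z))
      (by simpa using hi)
      (Finset.erase_subset _ _) (by simp) (by simp) (by rw [← Finset.card_pos]; omega)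
      (Or.inl (by rw [Finset.card_singleton]; omega)) ?_
    intro p _ _ _
    left
    simpa using hall p

/-! ### A cut attaining the bound -/

/-- The neighbourhood of `h + 1` vertices of a clique is an `h`-super cut. -/
theorem exists_cut {z : Fin k} (hz0 : (z : ℕ) = 0) {r h : ℕ} (hk : 2 ≤ k) (hn : n = k + r)
    (hr : 1 ≤ r) (hh : h ≤ r) :
    ∃ S : Set (NKVertex n k), IsHSuperCut (nkStar n k) h S ∧
      S.ncard ≤ r + (k - 1) + h * (k - 2) := by
  let c : NKVertex n k := ⟨Fin.castLE (by omega), Fin.castLE_injective _⟩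
  have hAl := card_Al (Finset.notMem_empty z) c
  rw [Finset.card_empty] at hAl
  obtain ⟨A, hA, hAc⟩ := Finset.exists_subset_card_eq (show h + 1 ≤ (Al z ∅ c).card by omega)
  set X := (Cp z ∅ c).filter fun p => p.1 z ∈ A with hX
  set R := (Cp z ∅ c).filter fun p => p.1 z ∉ A with hR
  set I := (X ×ˢ Finset.univ.erase z).image fun x => sw z x.1 x.2 with hI
  have tail : ∀ p ∈ Cp z ∅ c, ∀ j, j ≠ z → p.1 j = c.1 j := fun p hp j hj =>
    mem_Cp.1 hp j hj (by simp)
  have ofTail : ∀ p d : NKVertex n k, (∀ j, j ≠ z → p.1 j = d.1 j) → p ∈ Cp z ∅ d :=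
    fun p d h => mem_Cp.2 fun j hj _ => h j hj
  have hXC : ∀ p ∈ X, p ∈ Cp z ∅ c := fun p hp => (Finset.mem_filter.1 hp).1
  have mI : ∀ w, w ∈ I ↔ ∃ p ∈ X, ∃ i, i ≠ z ∧ w = sw z p i := by
    intro w
    simp only [hI, Finset.mem_image, Finset.mem_product, Finset.mem_erase, Finset.mem_univ,
      and_true, Prod.exists]
    constructor
    · rintro ⟨p, i, ⟨h1, h2⟩, rfl⟩; exact ⟨p, h1, i, h2, rfl⟩
    · rintro ⟨p, h1, i, h2, rfl⟩; exact ⟨p, i, ⟨h1, h2⟩, rfl⟩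
  have hIC : ∀ w ∈ I, w ∉ Cp z ∅ c := by
    intro w hw hwc
    obtain ⟨p, hp, i, hi, rfl⟩ := (mI w).1 hw
    have := tail _ hwc i hi
    rw [sw_i, ← tail p (hXC p hp) i hi] at this
    exact hi (p.2 this).symm
  -- The first symbol of a swapped vertex is an entry of the tail of `c`.
  have hIz : ∀ w ∈ I, w.1 z ∉ Al z ∅ c := by
    intro w hw hwA
    obtain ⟨p, hp, i, hi, rfl⟩ := (mI w).1 hw
    rw [sw_z, tail p (hXC p hp) i hi] at hwA
    exact mem_Al.1 hwA i hi (by simp) rfl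
  have hSmem : ∀ w, w ∈ R ∪ I ↔ w ∈ R ∨ w ∈ I := fun w => Finset.mem_union
  have hXS : ∀ w ∈ X, w ∉ R ∪ I := by
    intro w hw h1
    rcases (hSmem w).1 h1 with h1 | h1
    · exact (Finset.mem_filter.1 h1).2 (Finset.mem_filter.1 hw).2
    · exact hIC w h1 (hXC w hw)
  have hout : ∀ w, w ∉ X → w ∉ R ∪ I → w ∉ Cp z ∅ c := by
    intro w h1 h2 h3
    by_cases hwA : w.1 z ∈ A
    · exact h1 (Finset.mem_filter.2 ⟨h3, hwA⟩)
    · exact h2 ((hSmem w).2 (Or.inl (Finset.mem_filter.2 ⟨h3, hwA⟩)))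
  have exX : ∀ a ∈ A, ∃ p ∈ X, p.1 z = a := by
    intro a ha
    obtain ⟨p, hp, hpa⟩ := exists_one z ∅ c (hA ha)
    exact ⟨p, Finset.mem_filter.2 ⟨hp, hpa ▸ ha⟩, hpa⟩
  have hXcard : X.card = h + 1 := by
    rw [← hAc]
    apply le_antisymm
    · apply Finset.card_le_card_of_injOn (fun p => p.1 z)
      · intro p hp; exact (Finset.mem_filter.1 hp).2
      · intro p hp q hq h
        exact clique_ext (hXC p hp) (hXC q hq) h
    · apply Finset.card_le_card_of_surjOn (fun p => p.1 z)
      intro a ha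
      obtain ⟨p, hp, hpa⟩ := exX a ha
      exact ⟨p, hp, hpa⟩
  have hRcard : R.card + (h + 1) ≤ r + 1 := by
    have h1 : R.card ≤ (Al z ∅ c \ A).card := by
      apply Finset.card_le_card_of_injOn (fun p => p.1 z)
      · intro p hp
        have hp := Finset.mem_filter.1 hp
        exact Finset.mem_coe.2 (Finset.mem_sdiff.2 ⟨apply_mem_Al hp.1 (Or.inl rfl), hp.2⟩)
      · intro p hp q hq h
        exact clique_ext (Finset.mem_filter.1 hp).1 (Finset.mem_filter.1 hq).1 h
    have h2 := Finset.card_sdiff_add_card_eq_card hA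
    omega
  have hIcard : I.card ≤ (h + 1) * (k - 1) := by
    refine Finset.card_image_le.trans ?_
    rw [Finset.card_product, hXcard, Finset.card_erase_of_mem (Finset.mem_univ _),
      Finset.card_univ, Fintype.card_fin]
  have hXadj : ∀ x ∈ X, ∀ w, (nkStar n k).Adj x w → w ∉ R ∪ I → w ∈ X := by
    intro x hx w hxw hw
    by_contra hwX
    have hwc := hout w hwX hw
    rcases (adj_iff hz0 _ _).1 hxw with ⟨i, hi, rfl⟩ | ⟨_, h2⟩
    · exact hw ((hSmem _).2 (Or.inr ((mI _).2 ⟨x, hx, i, hi, rfl⟩)))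
    · exact hwc (ofTail _ _ fun j hj => by rw [h2 j hj, tail x (hXC x hx) j hj])
  refine ⟨↑(R ∪ I), ⟨?_, ?_⟩, ?_⟩
  · intro hconn
    obtain ⟨a, ha⟩ : A.Nonempty := by rw [← Finset.card_pos]; omega
    obtain ⟨x, hx, hxa⟩ := exX a ha
    obtain ⟨b, hb⟩ : ((Al z ∅ c).erase a).Nonempty := by
      rw [← Finset.card_pos, Finset.card_erase_of_mem (hA ha)]; omega
    rw [Finset.mem_erase] at hb
    obtain ⟨i, hi⟩ : ((Finset.univ : Finset (Fin k)).erase z).Nonempty := by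
      rw [← Finset.card_pos, Finset.card_erase_of_mem (Finset.mem_univ _), Finset.card_univ,
        Fintype.card_fin]
      omega
    have hi : i ≠ z := Finset.ne_of_mem_erase hi
    -- A vertex outside the cut and outside `X`.
    let v := rl (sw z x i) z b
    have hvz : v.1 z = b := rl_self _ _ _
    have hvi : v.1 i = a := by
      show (rl (sw z x i) z b).1 i = a
      rw [rl_ne _ hi, sw_i, hxa]
      rw [sw_i, hxa]; exact hb.1.symm
    have hvC : v ∉ Cp z ∅ c := by
      intro hv
      have h1 := tail v hv i hi
      rw [hvi] at h1
      exact mem_Al.1 (hA ha) i hi (by simp) h1.symm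
    have hvS : v ∉ R ∪ I := by
      intro hv
      rcases (hSmem v).1 hv with hv | hv
      · exact hvC (Finset.mem_filter.1 hv).1
      · exact hIz v hv (hvz ▸ hb.2)
    have hx' : x ∈ (↑(R ∪ I) : Set (NKVertex n k))ᶜ := hXS x hx
    have hv' : v ∈ (↑(R ∪ I) : Set (NKVertex n k))ᶜ := hvS
    obtain ⟨W⟩ := hconn.preconnected ⟨x, hx'⟩ ⟨v, hv'⟩
    have hwalk : ∀ (p q : ↥(↑(R ∪ I) : Set (NKVertex n k))ᶜ),
        ((nkStar n k).induce (↑(R ∪ I) : Set (NKVertex n k))ᶜ).Walk p q → p.1 ∈ X → q.1 ∈ X := by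
      intro p q W
      induction W with
      | nil => exact id
      | @cons _ w _ e _ ih => exact fun hp => ih (hXadj _ hp _ e w.2)
    exact hvC (hXC v (hwalk _ _ W hx))
  · intro v hv
    have hvS : v ∉ R ∪ I := hv
    have fin : ∀ Z : Finset (NKVertex n k), h ≤ Z.card →
        (∀ q ∈ Z, (nkStar n k).Adj v q ∧ q ∉ R ∪ I) →
        h ≤ ((nkStar n k).neighborSet v ∩ (↑(R ∪ I) : Set (NKVertex n k))ᶜ).ncard := by
      intro Z hZ hZ2
      refine hZ.trans ?_
      rw [← Set.ncard_coe_finset]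
      apply Set.ncard_le_ncard _ (Set.toFinite _)
      intro q hq
      exact ⟨(hZ2 q hq).1, (hZ2 q hq).2⟩
    by_cases hvX : v ∈ X
    · apply fin (X.erase v)
      · rw [Finset.card_erase_of_mem hvX]; omega
      · intro q hq
        rw [Finset.mem_erase] at hq
        refine ⟨(adj_iff hz0 _ _).2 (Or.inr ⟨hq.1.symm, fun j hj => ?_⟩), hXS q hq.2⟩
        rw [tail q (hXC q hq.2) j hj, tail v (hXC v hvX) j hj]
    have hvC := hout v hvX hvS
    have hcl := card_clique_le z v
    have hself := Cp_self z ∅ v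
    have hadj : ∀ q ∈ Cp z ∅ v, q ≠ v → (nkStar n k).Adj v q := by
      intro q hq hqv
      exact (adj_iff hz0 _ _).2 (Or.inr ⟨hqv.symm, fun j hj => mem_Cp.1 hq j hj (by simp)⟩)
    have hnR : ∀ q ∈ Cp z ∅ v, q ∉ Cp z ∅ c := by
      intro q hq hqc
      exact hvC (ofTail _ _ fun j hj => by
        rw [← mem_Cp.1 hq j hj (by simp), tail q hqc j hj])
    by_cases hex : ∃ w ∈ Cp z ∅ v, w ∈ I
    · obtain ⟨w, hwv, hwI⟩ := hex
      obtain ⟨p, hp, i, hi, hw⟩ := (mI w).1 hwI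
      have hwv' : ∀ j, j ≠ z → w.1 j = v.1 j := fun j hj => mem_Cp.1 hwv j hj (by simp)
      have hwi : w.1 i = p.1 z := by rw [hw, sw_i]
      have hwne : w ≠ v := by
        rintro rfl
        exact hvS ((hSmem _).2 (Or.inr hwI))
      have hpz : p.1 z ∈ Al z ∅ c := hA (Finset.mem_filter.1 hp).2
      -- A clique contains at most one swapped vertex.
      have huniq : ∀ u ∈ Cp z ∅ v, u ∈ I → u = w := by
        intro u hu huI
        obtain ⟨p', hp', i', hi', hu'⟩ := (mI u).1 huI
        have huw : ∀ j, j ≠ z → u.1 j = w.1 j := fun j hj => by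
          rw [mem_Cp.1 hu j hj (by simp), hwv' j hj]
        have hii : i' = i := by
          by_contra hne
          have h1 := huw i hi
          rw [hwi, hu', sw_ne _ hi (Ne.symm hne), tail p' (hXC p' hp') i hi] at h1
          exact mem_Al.1 hpz i hi (by simp) h1
        subst hii
        have h1 := huw i' hi'
        rw [hwi, hu', sw_i] at h1
        rw [hu', hw, clique_ext (hXC p' hp') (hXC p hp) h1]
      have hsnot : sw z v i ∉ Cp z ∅ v := by
        intro h1
        have h2 := mem_Cp.1 h1 i hi (by simp)
        rw [sw_i] at h2
        exact hi (v.2 h2).symm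
      -- The swap-neighbour at `i` makes up for the clique-neighbour `w` lost to the cut.
      apply fin (insert (sw z v i) (((Cp z ∅ v).erase v).erase w))
      · rw [Finset.card_insert_of_notMem, Finset.card_erase_of_mem,
          Finset.card_erase_of_mem hself]
        · omega
        · exact Finset.mem_erase.2 ⟨hwne, hwv⟩
        · intro h1
          exact hsnot (Finset.mem_of_mem_erase (Finset.mem_of_mem_erase h1))
      · intro q hq
        rcases Finset.mem_insert.1 hq with rfl | hq
        · refine ⟨adj_sw hz0 v hi, fun h1 => ?_⟩
          rcases (hSmem _).1 h1 with h1 | h1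
          · have h2 := tail _ (Finset.mem_filter.1 h1).1 i hi
            rw [sw_i] at h2
            apply hwne
            refine clique_ext hwv hself ?_
            rw [h2, hw, sw_z, tail p (hXC p hp) i hi]
          · apply hIz _ h1
            rw [sw_z, ← hwv' i hi, hwi]
            exact hpz
        · simp only [Finset.mem_erase] at hq
          refine ⟨hadj q hq.2.2 hq.2.1, fun h1 => ?_⟩
          rcases (hSmem _).1 h1 with h1 | h1
          · exact hnR q hq.2.2 (Finset.mem_filter.1 h1).1
          · exact hq.1 (huniq q hq.2.2 h1)
    · apply fin ((Cp z ∅ v).erase v)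
      · rw [Finset.card_erase_of_mem hself]; omega
      · intro q hq
        rw [Finset.mem_erase] at hq
        refine ⟨hadj q hq.2 hq.1, fun h1 => ?_⟩
        rcases (hSmem _).1 h1 with h1 | h1
        · exact hnR q hq.2 (Finset.mem_filter.1 h1).1
        · exact hex ⟨q, hq.2, h1⟩
  · rw [Set.ncard_coe_finset]
    refine (Finset.card_union_le _ _).trans ?_
    obtain ⟨e, rfl⟩ : ∃ e, k = e + 2 := ⟨k - 2, by omega⟩
    have e1 : e + 2 - 1 = e + 1 := rfl
    simp only [e1, Nat.add_sub_cancel] at hIcard ⊢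
    nlinarith

end Helpers

/-- For `2 ≤ k ≤ n−1` and `0 ≤ h ≤ n−k`,
`κ_s^{(h)}(S_{n,k}) = n + h(k−2) − 1`. -/
theorem hSuperConn_nkStar (n k h : ℕ) (hk2 : 2 ≤ k) (hkn : k < n) (hh : h ≤ n - k) :
    hSuperConn (nkStar n k) h = n + h * (k - 2) - 1 := by
  obtain ⟨r, rfl⟩ : ∃ r, n = k + r := ⟨n - k, by omega⟩
  have hr : 1 ≤ r := by omega
  have hh' : h ≤ r := by omega
  have hz0 : ((⟨0, by omega⟩ : Fin k) : ℕ) = 0 := rfl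
  have hval : k + r + h * (k - 2) - 1 = r + (k - 1) + h * (k - 2) := by omega
  rw [hval, hSuperConn]
  obtain ⟨S, hS, hSc⟩ := exists_cut hz0 hk2 rfl hr hh'
  apply le_antisymm
  · exact (Nat.sInf_le (Set.mem_image_of_mem Set.ncard hS)).trans hSc
  · refine le_csInf ⟨_, Set.mem_image_of_mem Set.ncard hS⟩ ?_
    rintro _ ⟨S', hS', rfl⟩
    exact cut_lower hz0 hk2 rfl hr hh' hS'
end

section
/- For all integers n and k with 2 ≤ k ≤ n−1 and every integer h with 0 ≤ h ≤ n−k, the (n,k)-star graph admits an h-super vertex-cut of cardinality n + h(k−2) − 1; consequently κ_s^{(h)}(S_{n,k}) ≤ n + h(k−2) − 1. -/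
namespace NKCut

variable {n m : ℕ}

/-- The symbols that can stand in front of the tail `c₂ … c_k`. -/
abbrev Free (c : NKVertex n (m + 2)) : Type := {α : Fin n // ∀ j, j ≠ 0 → c.1 j ≠ α}

/-- The vertex obtained from `v` by swapping its first bit with its `i`-th bit (`v` itself when
`i = 0`). -/
def swapAt (v : NKVertex n (m + 2)) (i : Fin (m + 2)) : NKVertex n (m + 2) :=
  ⟨v.1 ∘ Equiv.swap 0 i, v.2.comp (Equiv.injective _)⟩

/-- The vertex obtained from `v` by replacing its first bit by `α`, which must not occur in
the tail of `v`. -/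
def front (v : NKVertex n (m + 2)) (α : Free v) : NKVertex n (m + 2) :=
  ⟨Function.update v.1 0 α.1, by
    intro i j hij
    have hα := α.2
    have hv := @v.2 i j
    by_cases hi : i = 0 <;> by_cases hj : j = 0 <;> simp_all [Function.update]
    exact absurd rfl (hα j hj)⟩

/-- The vertex `α c₂ … c_k` swapped at position `i`. -/
def spot (c : NKVertex n (m + 2)) (x : Free c × Fin (m + 2)) : NKVertex n (m + 2) :=
  swapAt (front c x.1) x.2

variable {c v w : NKVertex n (m + 2)}

lemma front_zero (α : Free v) : (front v α).1 0 = α.1 := by simp [front]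

lemma front_of_ne (α : Free v) {j : Fin (m + 2)} (hj : j ≠ 0) : (front v α).1 j = v.1 j := by
  simp [front, hj]

lemma spot_self (a : Free c) (i : Fin (m + 2)) : (spot c (a, i)).1 i = a.1 := by
  simp [spot, swapAt, front]

lemma spot_zero (a : Free c) {i : Fin (m + 2)} (hi : i ≠ 0) :
    (spot c (a, i)).1 0 = c.1 i := by
  simp [spot, swapAt, front, hi]

lemma spot_of_ne (a : Free c) {i j : Fin (m + 2)} (hj : j ≠ 0) (hji : j ≠ i) :
    (spot c (a, i)).1 j = c.1 j := by
  simp [spot, swapAt, front, Equiv.swap_apply_of_ne_of_ne hj hji, hj]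

/-- The inserted symbol is the only free symbol in `spot c (a, i)`, so it determines `a`
and `i`. -/
lemma eq_of_spot_eq {a b : Free c} {i j : Fin (m + 2)} (h : (spot c (a, i)).1 j = b.1) :
    j = i ∧ a = b := by
  by_cases hji : j = i
  · subst hji
    exact ⟨rfl, Subtype.ext ((spot_self a j).symm.trans h)⟩
  · exfalso
    by_cases hj : j = 0
    · subst hj
      rw [spot_zero a (Ne.symm hji)] at h
      exact b.2 i (Ne.symm hji) h
    · rw [spot_of_ne a hj hji] at h
      exact b.2 j hj h

lemma spot_injective : Function.Injective (spot c) := by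
  rintro ⟨a, i⟩ ⟨b, j⟩ h
  have := spot_self b j
  rw [← h] at this
  obtain ⟨rfl, rfl⟩ := eq_of_spot_eq this
  rfl

lemma eq_spot_zero_of_tail (h : ∀ j, j ≠ 0 → v.1 j = c.1 j) : ∃ a, v = spot c (a, 0) := by
  refine ⟨⟨v.1 0, fun j hj e => hj (v.2 ((h j hj).trans e))⟩, Subtype.ext (funext fun j => ?_)⟩
  by_cases hj : j = 0
  · subst hj; rw [spot_self]
  · rw [spot_of_ne _ hj hj, h j hj]

lemma card_free (c : NKVertex n (m + 2)) : Fintype.card (Free c) = n - (m + 1) := by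
  have h1 : (Finset.univ.filter fun α : Fin n => ∀ j, j ≠ 0 → c.1 j ≠ α)
      = ((Finset.univ.erase (0 : Fin (m + 2))).image c.1)ᶜ := by
    ext α; simp
  rw [Fintype.card_subtype, h1, Finset.card_compl, Finset.card_image_of_injective _ c.2]
  simp

lemma adj_swapAt {i : Fin (m + 2)} (hi : i ≠ 0) : (nkStar n (m + 2)).Adj v (swapAt v i) := by
  refine (SimpleGraph.fromRel_adj _ _ _).2 ⟨fun h => hi ?_, Or.inl (Or.inl ?_)⟩
  · have := congrFun (congrArg Subtype.val h) 0
    exact (v.2 (by simpa [swapAt] using this)).symm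
  · exact ⟨Nat.succ_pos _, i, fun h => hi (Fin.ext h), rfl⟩

/-- Two distinct vertices with the same tail are joined by an unswap-edge. -/
lemma adj_of_tail (hne : v ≠ w) (h : ∀ j, j ≠ 0 → w.1 j = v.1 j) :
    (nkStar n (m + 2)).Adj v w := by
  refine (SimpleGraph.fromRel_adj _ _ _).2 ⟨hne, Or.inl (Or.inr ⟨Nat.succ_pos _, ?_, ?_⟩)⟩
  · exact fun j hj => h j (fun e => hj (by simp [e]))
  · rintro ⟨j, hj⟩
    change v.1 j = w.1 0 at hj
    by_cases hj0 : j = 0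
    · subst hj0
      refine hne (Subtype.ext (funext fun i => ?_))
      by_cases hi : i = 0
      · subst hi; exact hj
      · exact (h i hi).symm
    · rw [← h j hj0] at hj
      exact hj0 (w.2 hj)

lemma adj_cases (h : (nkStar n (m + 2)).Adj v w) :
    (∃ i, i ≠ 0 ∧ w = swapAt v i) ∨ ∀ j, j ≠ 0 → w.1 j = v.1 j := by
  obtain ⟨-, (⟨_, i, hi, e⟩ | ⟨_, e, -⟩) | (⟨_, i, hi, e⟩ | ⟨_, e, -⟩)⟩ :=
    (SimpleGraph.fromRel_adj _ _ _).1 h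
  · exact Or.inl ⟨i, fun h => hi (by simp [h]), Subtype.ext e⟩
  · exact Or.inr fun j hj => e j fun h => hj (Fin.ext h)
  · refine Or.inl ⟨i, fun h => hi (by simp [h]), Subtype.ext ?_⟩
    change w.1 = v.1 ∘ Equiv.swap 0 i
    have e' : v.1 = w.1 ∘ Equiv.swap 0 i := e
    rw [e', Function.comp_assoc]
    ext; simp
  · exact Or.inr fun j hj => (e j fun h => hj (Fin.ext h)).symm

/-- The indices of the vertices of the cut: the clique vertices with front symbol outside `A`,
and the proper swaps of those with front symbol in `A`. -/
def cutIndex (A : Finset (Free c)) : Finset (Free c × Fin (m + 2)) :=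
  Finset.univ.filter fun x => x.1 ∈ A ↔ x.2 ≠ 0

/-- For nonempty `A`, the neighbourhood of the clique `{α c₂ … c_k | α ∈ A}`. -/
def cut (A : Finset (Free c)) : Set (NKVertex n (m + 2)) := spot c '' (cutIndex A)

/-- The clique `{α c₂ … c_k | α ∈ A}`. -/
def blob (A : Finset (Free c)) : Set (NKVertex n (m + 2)) := {v | ∃ a ∈ A, v = spot c (a, 0)}

lemma spot_mem_cut {A : Finset (Free c)} {a : Free c} {i : Fin (m + 2)} :
    spot c (a, i) ∈ cut A ↔ (a ∈ A ↔ i ≠ 0) := by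
  rw [cut, spot_injective.mem_set_image]
  simp [cutIndex]

lemma ncard_cut (A : Finset (Free c)) :
    (cut A).ncard = (n - (m + 1) - A.card) + A.card * (m + 1) := by
  have h1 : cutIndex A =
      Aᶜ ×ˢ ({0} : Finset (Fin (m + 2))) ∪ A ×ˢ ({0} : Finset (Fin (m + 2)))ᶜ := by
    ext ⟨a, i⟩
    by_cases ha : a ∈ A <;> by_cases hi : i = 0 <;>
      simp only [cutIndex, Finset.mem_filter, Finset.mem_univ, Finset.mem_union, Finset.mem_product,
        Finset.mem_compl, Finset.mem_singleton, ha, hi] <;> simp [hi]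
  rw [cut, Set.ncard_image_of_injective _ spot_injective, Set.ncard_coe_finset, h1,
    Finset.card_union_of_disjoint]
  · simp [Finset.card_product, Finset.card_compl, card_free]
  · rw [Finset.disjoint_left]
    rintro ⟨a, i⟩ h h'
    simp only [Finset.mem_product, Finset.mem_compl] at h h'
    exact h.1 h'.1

lemma mem_blob_or_cut (A : Finset (Free c)) (h : ∀ j, j ≠ 0 → v.1 j = c.1 j) :
    v ∈ blob A ∨ v ∈ cut A := by
  obtain ⟨a, rfl⟩ := eq_spot_zero_of_tail h
  by_cases ha : a ∈ A
  · exact Or.inl ⟨a, ha, rfl⟩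
  · exact Or.inr (spot_mem_cut.2 (by simp [ha]))

lemma adj_blob {A : Finset (Free c)} (hv : v ∈ blob A) (h : (nkStar n (m + 2)).Adj v w)
    (hw : w ∉ cut A) : w ∈ blob A := by
  obtain ⟨a, ha, rfl⟩ := hv
  rcases adj_cases h with ⟨i, hi, rfl⟩ | h
  · refine absurd ?_ hw
    have : swapAt (spot c (a, 0)) i = spot c (a, i) := by
      apply Subtype.ext
      simp [spot, swapAt]
    rw [this, spot_mem_cut]
    simp [ha, hi]
  · exact (mem_blob_or_cut A fun j hj => (h j hj).trans (spot_of_ne a hj hj)).resolve_right hw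

instance : Finite (NKVertex n (m + 2)) := inferInstanceAs (Finite {_p : Fin (m + 2) → Fin n // _})

lemma degree_blob {A : Finset (Free c)} (hv : v ∈ blob A) :
    A.card - 1 ≤ ((nkStar n (m + 2)).neighborSet v ∩ (cut A)ᶜ).ncard := by
  classical
  obtain ⟨a, ha, rfl⟩ := hv
  have hinj : Function.Injective fun b : Free c => spot c (b, 0) :=
    fun b b' h => (Prod.mk.inj (spot_injective h)).1
  rw [← Finset.card_erase_of_mem ha, ← Set.ncard_coe_finset, ← Set.ncard_image_of_injective _ hinj]
  refine Set.ncard_le_ncard ?_ (Set.toFinite _)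
  rintro _ ⟨b, hb, rfl⟩
  obtain ⟨hba, hb⟩ := Finset.mem_erase.1 (Finset.mem_coe.1 hb)
  refine ⟨adj_of_tail (fun e => hba (hinj e).symm) fun j hj => ?_, fun h => ?_⟩
  · rw [spot_of_ne b hj hj, spot_of_ne a hj hj]
  · exact (spot_mem_cut.1 h).1 hb rfl

lemma le_degree_outside {A : Finset (Free c)} (hv : v ∉ blob A) (hvS : v ∉ cut A) :
    n - (m + 2) ≤ ((nkStar n (m + 2)).neighborSet v ∩ (cut A)ᶜ).ncard := by
  classical
  -- `N` is the set of unswap-neighbours of `v`.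
  set N : Set (NKVertex n (m + 2)) := front v '' {α | α.1 ≠ v.1 0} with hN
  have hfinj : Function.Injective (front v) := fun α β h => by
    apply Subtype.ext
    rw [← front_zero α, ← front_zero β, h]
  have hNcard : N.ncard = n - (m + 2) := by
    let z : Free v := ⟨v.1 0, fun j hj e => hj (v.2 e)⟩
    have : {α : Free v | α.1 ≠ v.1 0} = ((Finset.univ.erase z : Finset (Free v)) : Set (Free v)) := by
      ext α; simp [z, Subtype.ext_iff]
    rw [hN, Set.ncard_image_of_injective _ hfinj, this, Set.ncard_coe_finset,
      Finset.card_erase_of_mem (Finset.mem_univ _), Finset.card_univ, card_free]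
    omega
  have hNtail : ∀ w ∈ N, ∀ j, j ≠ 0 → w.1 j = v.1 j := by
    rintro _ ⟨α, -, rfl⟩ j hj
    exact front_of_ne α hj
  have hNadj : ∀ w ∈ N, (nkStar n (m + 2)).Adj v w := by
    intro w hw
    refine adj_of_tail ?_ (hNtail w hw)
    obtain ⟨α, hα, rfl⟩ := hw
    intro e
    apply hα
    rw [← front_zero α, ← e]
  -- An unswap-neighbour of `v` in the cut is a proper swap, as `v` is not in the clique of `c`.
  have key : ∀ w ∈ N, w ∈ cut A → ∃ a i, i ≠ 0 ∧ a ∈ A ∧ w = spot c (a, i) := by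
    rintro w hw ⟨⟨a, i⟩, hx, rfl⟩
    have hx' : a ∈ A ↔ i ≠ 0 := by simpa [cutIndex] using hx
    by_cases hi : i = 0
    · subst hi
      exact ((mem_blob_or_cut A fun j hj =>
        (hNtail _ hw j hj).symm.trans (spot_of_ne a hj hj)).elim hv hvS).elim
    · exact ⟨a, i, hi, hx'.2 hi, rfl⟩
  by_cases hex : ∃ w ∈ N, w ∈ cut A
  · obtain ⟨w, hwN, hwS⟩ := hex
    obtain ⟨a, i, hi, ha, rfl⟩ := key w hwN hwS
    have hvi : v.1 i = a.1 := by rw [← hNtail _ hwN i hi, spot_self]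
    have huniq : ∀ w' ∈ N, w' ∈ cut A → w' = spot c (a, i) := by
      intro w' hw' hw'S
      obtain ⟨b, j, hj, hb, rfl⟩ := key w' hw' hw'S
      obtain ⟨rfl, rfl⟩ := eq_of_spot_eq ((hNtail _ hw' i hi).trans hvi)
      rfl
    have hs0 : (swapAt v i).1 0 = a.1 := by simp [swapAt, hvi]
    have hsi : (swapAt v i).1 i = v.1 0 := by simp [swapAt]
    have hsS : swapAt v i ∉ cut A := by
      rintro ⟨⟨b, j⟩, -, e⟩
      rw [← e] at hs0 hsi
      -- The free symbol `a` sits in front, so `j = 0` and the `i`-th bit is `c i`; but then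
      -- `v = spot c (a, i)` would lie in the cut.
      obtain ⟨rfl, rfl⟩ := eq_of_spot_eq hs0
      rw [spot_of_ne b hi hi] at hsi
      have : v = spot c (b, i) := by
        refine Subtype.ext (funext fun j => ?_)
        by_cases hj : j = 0
        · subst hj; rw [spot_zero b hi, hsi]
        · exact (hNtail _ hwN j hj).symm
      exact hvS (this ▸ hwS)
    have hsN : swapAt v i ∉ N := fun h => by
      have h1 := hNtail _ h i hi
      rw [hsi] at h1
      exact hi (v.2 h1).symm
    calc n - (m + 2) = (insert (swapAt v i) (N \ {spot c (a, i)})).ncard := by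
          rw [Set.ncard_insert_of_notMem (fun h => hsN h.1) (Set.toFinite _),
            Set.ncard_sdiff_singleton_add_one hwN (Set.toFinite _), hNcard]
      _ ≤ _ := by
          refine Set.ncard_le_ncard ?_ (Set.toFinite _)
          rintro w (rfl | ⟨hw, hne⟩)
          · exact ⟨adj_swapAt hi, hsS⟩
          · exact ⟨hNadj w hw, fun h => hne (huniq w hw h)⟩
  · rw [← hNcard]
    exact Set.ncard_le_ncard (fun w hw => ⟨hNadj w hw, fun h => hex ⟨w, hw, h⟩⟩) (Set.toFinite _)

lemma not_connected {A : Finset (Free c)} {a y : Free c} (ha : a ∈ A) (hay : y ≠ a) :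
    ¬ ((nkStar n (m + 2)).induce (cut A)ᶜ).Connected := by
  intro hconn
  have hyfree : ∀ j, j ≠ 0 → (spot c (a, 1)).1 j ≠ y.1 := fun j _ e =>
    hay (eq_of_spot_eq e).2.symm
  -- The vertex `y a c₃ … c_k` contains two free symbols, so it is no `spot c x`.
  let q := front (spot c (a, 1)) ⟨y.1, hyfree⟩
  have hq : ∀ b j, q ≠ spot c (b, j) := by
    intro b j e
    have h0 : q.1 0 = y.1 := front_zero _
    have h1 : q.1 1 = a.1 := (front_of_ne _ (by simp)).trans (spot_self a 1)
    rw [e] at h0 h1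
    exact absurd ((eq_of_spot_eq h0).1.trans (eq_of_spot_eq h1).1.symm) (by simp)
  have hqS : q ∉ cut A := by
    rintro ⟨⟨b, j⟩, -, e⟩
    exact hq b j e.symm
  have hpS : spot c (a, 0) ∉ cut A := fun h => (spot_mem_cut.1 h).1 ha rfl
  obtain ⟨p⟩ := hconn.preconnected ⟨_, hpS⟩ ⟨q, hqS⟩
  have stay : ∀ (x y : ((cut A)ᶜ : Set (NKVertex n (m + 2))))
      (_ : ((nkStar n (m + 2)).induce (cut A)ᶜ).Walk x y), x.1 ∈ blob A → y.1 ∈ blob A := by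
    intro x y p
    induction p with
    | nil => exact id
    | @cons u v w h _ ih => exact fun hu => ih (adj_blob hu (SimpleGraph.induce_adj.1 h) v.2)
  obtain ⟨b, -, e⟩ := stay _ _ p ⟨a, ha, rfl⟩
  exact hq b 0 e

end NKCut

/-- For `2 ≤ k ≤ n−1` and `0 ≤ h ≤ n−k`, the graph `S_{n,k}` admits an
`h`-super vertex-cut of cardinality `n + h(k−2) − 1`; consequently
`κ_s^{(h)}(S_{n,k}) ≤ n + h(k−2) − 1`. -/
theorem nkStar_exists_hSuperCut (n k h : ℕ) (hk2 : 2 ≤ k) (hkn : k < n) (hh : h ≤ n - k) :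
    (∃ S : Set (NKVertex n k), IsHSuperCut (nkStar n k) h S ∧ S.ncard = n + h * (k - 2) - 1) ∧
    hSuperConn (nkStar n k) h ≤ n + h * (k - 2) - 1 := by
  suffices H : ∃ S : Set (NKVertex n k), IsHSuperCut (nkStar n k) h S ∧
      S.ncard = n + h * (k - 2) - 1 by
    refine ⟨H, ?_⟩
    obtain ⟨S, hS, hc⟩ := H
    exact Nat.sInf_le ⟨S, hS, hc⟩
  obtain ⟨m, rfl⟩ : ∃ m, k = m + 2 := ⟨k - 2, by omega⟩
  let c : NKVertex n (m + 2) := ⟨Fin.castLE hkn.le, Fin.castLE_injective hkn.le⟩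
  have hcard := NKCut.card_free c
  obtain ⟨A, -, hA⟩ := Finset.exists_subset_card_eq
    (s := (Finset.univ : Finset (NKCut.Free c))) (n := h + 1)
    (by rw [Finset.card_univ, hcard]; omega)
  obtain ⟨a, ha⟩ : A.Nonempty := Finset.card_pos.1 (by omega)
  have : Nontrivial (NKCut.Free c) := Fintype.one_lt_card_iff_nontrivial.1 (by rw [hcard]; omega)
  obtain ⟨y, hy⟩ := exists_ne a
  refine ⟨NKCut.cut A, ⟨NKCut.not_connected ha hy, fun v hv => ?_⟩, ?_⟩
  · by_cases hvb : v ∈ NKCut.blob A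
    · have := NKCut.degree_blob hvb
      rwa [hA] at this
    · exact hh.trans (NKCut.le_degree_outside hvb hv)
  · rw [NKCut.ncard_cut, hA, Nat.add_sub_cancel]
    obtain ⟨d, rfl⟩ : ∃ d, n = m + 2 + h + d := ⟨n - (m + 2) - h, by omega⟩
    have h1 : m + 2 + h + d - (m + 1) - (h + 1) = d := by omega
    have h2 : (h + 1) * (m + 1) = h * m + h + m + 1 := by ring
    omega
end

section
/- For every integer n ≥ 3 and every integer h with 0 ≤ h ≤ n−2, the h-super connectivity of the (n,2)-star graph satisfies κ_s^{(h)}(S_{n,2}) = n − 1. -/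
namespace NKStarTwo

variable {n : ℕ}

instance : Finite (NKVertex n 2) := by
  unfold NKVertex
  infer_instance

/-- The vertex `(a, b)` of `S_{n,2}`. -/
def pair (a b : Fin n) (hab : a ≠ b) : NKVertex n 2 :=
  ⟨![a, b], by
    intro i j hij
    fin_cases i <;> fin_cases j <;> simp_all⟩

@[simp] lemma pair_zero (a b : Fin n) (hab : a ≠ b) : (pair a b hab).1 0 = a := rfl

@[simp] lemma pair_one (a b : Fin n) (hab : a ≠ b) : (pair a b hab).1 1 = b := rfl

lemma ne (p : NKVertex n 2) : p.1 0 ≠ p.1 1 := fun h => by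
  simpa using p.2 h

lemma ext {p q : NKVertex n 2} (h0 : p.1 0 = q.1 0) (h1 : p.1 1 = q.1 1) : p = q := by
  apply Subtype.ext
  funext i
  fin_cases i
  · exact h0
  · exact h1

lemma swapRel_iff (p q : NKVertex n 2) :
    SwapRel p q ↔ q.1 0 = p.1 1 ∧ q.1 1 = p.1 0 := by
  constructor
  · rintro ⟨_, i, hi, hq⟩
    have hi1 : i = 1 := by omega
    subst hi1
    rw [hq]
    constructor
    · exact congrArg p.1 (Equiv.swap_apply_left _ _)
    · exact congrArg p.1 (Equiv.swap_apply_right _ _)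
  · rintro ⟨h0, h1⟩
    refine ⟨by norm_num, 1, by norm_num, ?_⟩
    funext i
    fin_cases i
    · exact h0.trans (congrArg p.1 (Equiv.swap_apply_left _ _).symm)
    · exact h1.trans (congrArg p.1 (Equiv.swap_apply_right _ _).symm)

lemma unswapRel_iff (p q : NKVertex n 2) :
    UnswapRel p q ↔ q.1 1 = p.1 1 ∧ q.1 0 ≠ p.1 0 := by
  constructor
  · rintro ⟨_, h1, h0⟩
    exact ⟨h1 1 (by norm_num), fun h => h0 ⟨0, h.symm⟩⟩
  · rintro ⟨h1, h0⟩
    refine ⟨by norm_num, ?_, ?_⟩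
    · intro j hj
      have hj1 : j = 1 := by omega
      rw [hj1, h1]
    · rintro ⟨i, hi⟩
      fin_cases i
      · exact h0 hi.symm
      · exact ne q (hi.symm.trans h1.symm)

lemma adj_iff (p q : NKVertex n 2) :
    (nkStar n 2).Adj p q ↔
      (q.1 0 = p.1 1 ∧ q.1 1 = p.1 0) ∨ (q.1 1 = p.1 1 ∧ q.1 0 ≠ p.1 0) := by
  unfold nkStar
  rw [SimpleGraph.fromRel_adj, swapRel_iff, swapRel_iff, unswapRel_iff, unswapRel_iff]
  have hp := ne p
  constructor
  · rintro ⟨-, (h | h) | (h | h)⟩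
    · exact .inl h
    · exact .inr h
    · exact .inl ⟨h.2.symm, h.1.symm⟩
    · exact .inr ⟨h.1.symm, h.2.symm⟩
  · intro h
    refine ⟨?_, .inl h⟩
    rintro rfl
    rcases h with h | h
    · exact hp h.1
    · exact h.2 rfl

lemma reachable_of_adj_pair {S : Set (NKVertex n 2)} {p q : NKVertex n 2} (hp : p ∈ Sᶜ)
    (hq : q ∈ Sᶜ) (h : (nkStar n 2).Adj p q) :
    ((nkStar n 2).induce Sᶜ).Reachable ⟨p, hp⟩ ⟨q, hq⟩ :=
  SimpleGraph.Adj.reachable (G := (nkStar n 2).induce Sᶜ) h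

/-- Surviving vertices of the same clique remain connected. -/
lemma reachable_of_snd_eq {S : Set (NKVertex n 2)} {p q : NKVertex n 2} (hp : p ∈ Sᶜ)
    (hq : q ∈ Sᶜ) (h : q.1 1 = p.1 1) :
    ((nkStar n 2).induce Sᶜ).Reachable ⟨p, hp⟩ ⟨q, hq⟩ := by
  by_cases h0 : q.1 0 = p.1 0
  · obtain rfl : q = p := ext h0 h
    exact SimpleGraph.Reachable.refl _
  · exact reachable_of_adj_pair hp hq ((adj_iff p q).2 (.inr ⟨h, h0⟩))

/-- The index `e` of the path from clique `b` to clique `d` that contains a given vertex; vertices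
on none of the paths receive an irrelevant value. -/
def pathIndex (b d : Fin n) (p : NKVertex n 2) : Fin n :=
  if p.1 1 = b then p.1 0 else if p.1 0 = b then p.1 1 else if p.1 1 = d then p.1 0 else p.1 1

lemma connected_of_ncard_lt (hn : 3 ≤ n) (S : Set (NKVertex n 2)) (hS : S.ncard < n - 1) :
    ((nkStar n 2).induce Sᶜ).Connected := by
  -- For any `b` and `d`, some path index `e ≠ b` is not hit by `S`.
  have key : ∀ b d : Fin n, ∃ e, e ≠ b ∧ ∀ p, pathIndex b d p = e → p ∈ Sᶜ := by
    intro b d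
    have h1 : (insert b (pathIndex b d '' S)).ncard < (Set.univ : Set (Fin n)).ncard := by
      have := Set.ncard_insert_le b (pathIndex b d '' S)
      have := Set.ncard_image_le (f := pathIndex b d) S.toFinite
      rw [Set.ncard_univ, Nat.card_eq_fintype_card, Fintype.card_fin]
      omega
    obtain ⟨e, -, he⟩ := Set.exists_mem_notMem_of_ncard_lt_ncard h1
    refine ⟨e, fun h => he (.inl h), fun p hp hpS => he (.inr ⟨p, hpS, hp⟩)⟩
  have pre : ((nkStar n 2).induce Sᶜ).Preconnected := by
    rintro ⟨u, hu⟩ ⟨v, hv⟩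
    by_cases huv : v.1 1 = u.1 1
    · exact reachable_of_snd_eq hu hv huv
    obtain ⟨e, heb, he⟩ := key (u.1 1) (v.1 1)
    have m1 : pair e (u.1 1) heb ∈ Sᶜ := he _ (by simp [pathIndex])
    have m2 : pair (u.1 1) e heb.symm ∈ Sᶜ := he _ (by simp [pathIndex, heb])
    have r1 := reachable_of_snd_eq hu m1 (by simp)
    have r2 := reachable_of_adj_pair m1 m2 ((adj_iff _ _).2 (by simp))
    by_cases hed : e = v.1 1
    · exact (r1.trans r2).trans (reachable_of_snd_eq m2 hv (by simp [hed]))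
    · have m3 : pair (v.1 1) e (Ne.symm hed) ∈ Sᶜ :=
        he _ (by simp [pathIndex, heb, huv, hed])
      have m4 : pair e (v.1 1) hed ∈ Sᶜ := he _ (by simp [pathIndex, heb, huv])
      have r3 := reachable_of_snd_eq m2 m3 (by simp)
      have r4 := reachable_of_adj_pair m3 m4 ((adj_iff _ _).2 (by simp))
      exact (((r1.trans r2).trans r3).trans r4).trans (reachable_of_snd_eq m4 hv (by simp))
  -- A path missed by `S` also shows that some vertex survives.
  obtain ⟨e, heb, he⟩ := key ⟨0, by omega⟩ ⟨0, by omega⟩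
  have : Nonempty (Sᶜ : Set (NKVertex n 2)) :=
    ⟨⟨pair e ⟨0, by omega⟩ heb, he _ (by simp [pathIndex])⟩⟩
  exact ⟨pre⟩

/-- The vertices with first entry `c`: these separate the clique with second entry `c`. -/
def cut (c : Fin n) : Set (NKVertex n 2) := {p | p.1 0 = c}

lemma ncard_cut_le (c : Fin n) : (cut c).ncard ≤ n - 1 := by
  have h : (cut c).ncard ≤ ({c}ᶜ : Set (Fin n)).ncard := by
    refine Set.ncard_le_ncard_of_injOn (fun p => p.1 1) ?_ ?_
    · intro p hp h
      exact ne p (Eq.trans hp (Eq.symm h))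
    · intro p hp q hq h
      exact ext (Eq.trans hp (Eq.symm hq)) h
  rwa [Set.ncard_compl, Set.ncard_singleton, Nat.card_eq_fintype_card, Fintype.card_fin] at h

lemma cut_not_connected (hn : 3 ≤ n) (c : Fin n) :
    ¬ ((nkStar n 2).induce (cut c)ᶜ).Connected := by
  intro hc
  obtain ⟨x, hx⟩ : ∃ x, x ∉ ({c} : Finset (Fin n)) :=
    Finset.exists_mem_notMem_of_card_lt_card (s := {c}) (t := Finset.univ)
      (by simp; omega) |>.imp fun _ h => h.2
  obtain ⟨y, hy⟩ : ∃ y, y ∉ ({c, x} : Finset (Fin n)) :=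
    Finset.exists_mem_notMem_of_card_lt_card (s := {c, x}) (t := Finset.univ)
      (by have := Finset.card_le_two (a := c) (b := x); simp; omega) |>.imp fun _ h => h.2
  simp only [Finset.mem_singleton, Finset.mem_insert, not_or] at hx hy
  -- Having second entry `c` is preserved along edges that avoid the cut.
  have inv : ∀ u v : ((cut c)ᶜ : Set (NKVertex n 2)),
      ((nkStar n 2).induce (cut c)ᶜ).Walk u v → u.1.1 1 = c → v.1.1 1 = c := by
    intro u v w
    induction w with
    | nil => exact id
    | @cons a b _ hab _ ih =>
      intro ha
      refine ih ?_
      rcases (adj_iff a.1 b.1).1 hab with h | h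
      · exact absurd (h.1.trans ha) b.2
      · exact h.1.trans ha
  obtain ⟨w⟩ := hc.preconnected ⟨pair x c hx, hx⟩ ⟨pair y x hy.2, hy.1⟩
  exact hx (inv _ _ w rfl)

lemma le_degree_cut (c : Fin n) (v : NKVertex n 2) (hv : v ∈ (cut c)ᶜ) :
    n - 2 ≤ ((nkStar n 2).neighborSet v ∩ (cut c)ᶜ).ncard := by
  have hvc : v.1 0 ≠ c := hv
  -- Each `x ∉ {v 0, c}` is the first entry of a surviving neighbour of `v`.
  have hsub : ({v.1 0, c}ᶜ : Set (Fin n)) ⊆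
      (fun p : NKVertex n 2 => p.1 0) '' ((nkStar n 2).neighborSet v ∩ (cut c)ᶜ) := by
    intro x hx
    simp only [Set.mem_compl_iff, Set.mem_insert_iff, Set.mem_singleton_iff, not_or] at hx
    by_cases hxb : x = v.1 1
    · exact ⟨pair x (v.1 0) hx.1, ⟨(adj_iff _ _).2 (.inl ⟨hxb, rfl⟩), hx.2⟩, rfl⟩
    · exact ⟨pair x (v.1 1) hxb, ⟨(adj_iff _ _).2 (.inr ⟨rfl, hx.1⟩), hx.2⟩, rfl⟩
  have h1 := Set.ncard_le_ncard hsub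
  rw [Set.ncard_compl, Set.ncard_pair hvc, Nat.card_eq_fintype_card, Fintype.card_fin] at h1
  exact h1.trans (Set.ncard_image_le (Set.toFinite _))

end NKStarTwo

/-- For `n ≥ 3` and `0 ≤ h ≤ n−2`, `κ_s^{(h)}(S_{n,2}) = n − 1`. -/
theorem hSuperConn_nkStar_two (n h : ℕ) (hn : 3 ≤ n) (hh : h ≤ n - 2) :
    hSuperConn (nkStar n 2) h = n - 1 := by
  let c : Fin n := ⟨0, by omega⟩
  have hcut : IsHSuperCut (nkStar n 2) h (NKStarTwo.cut c) :=
    ⟨NKStarTwo.cut_not_connected hn c, fun v hv => hh.trans (NKStarTwo.le_degree_cut c v hv)⟩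
  have hmem : (NKStarTwo.cut c).ncard ∈ Set.ncard '' {S | IsHSuperCut (nkStar n 2) h S} :=
    ⟨_, hcut, rfl⟩
  refine le_antisymm ((Nat.sInf_le hmem).trans (NKStarTwo.ncard_cut_le c)) ?_
  refine le_csInf ⟨_, hmem⟩ ?_
  rintro _ ⟨S, hS, rfl⟩
  by_contra hlt
  exact hS.1 (NKStarTwo.connected_of_ncard_lt hn S (by omega))
end

section
/- Let 2 ≤ k ≤ n−1, fix an integer t with 2 ≤ t ≤ k, and let i, j ∈ {1,…,n} with i ≠ j. Then the set of edges of S_{n,k} joining a vertex of S^{t:i}_{n−1,k−1} to a vertex of S^{t:j}_{n−1,k−1} consists of exactly (n−2)!/(n−k)! swap-edges, and these edges are pairwise independent (no two share an endpoint). -/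
/-- The vertex obtained by swapping bits `a` and `b`. -/
def swapVertex {n k : ℕ} (a b : Fin k) (p : NKVertex n k) : NKVertex n k :=
  ⟨p.1 ∘ Equiv.swap a b, p.2.comp (Equiv.swap a b).injective⟩

/-- The vertex with bit `j` at position `z`, bit `i` at position `t`, and the remaining bits
prescribed by `f`. -/
def fillVertex {n k : ℕ} (z t : Fin k) (i j : Fin n) (hij : i ≠ j)
    (f : {x : Fin k // x ≠ z ∧ x ≠ t} ↪ {y : Fin n // y ≠ j ∧ y ≠ i}) : NKVertex n k :=
  ⟨fun x => if hz : x = z then j else if ht : x = t then i else (f ⟨x, hz, ht⟩).1, by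
    intro x y hxy
    dsimp only at hxy
    split_ifs at hxy with h1 h2 h3 h4 h5 h6 h7 h8
    · rw [h1, h2]
    · exact absurd hxy.symm hij
    · exact absurd hxy.symm (f _).2.1
    · exact absurd hxy hij
    · rw [h4, h6]
    · exact absurd hxy.symm (f _).2.2
    · exact absurd hxy (f _).2.1
    · exact absurd hxy (f _).2.2
    · exact congrArg Subtype.val (f.injective (Subtype.ext hxy))⟩

/-- Only the swap of the first bit with bit `t` can join two vertices differing in bit `t`. -/
lemma cross_edge_iff {n k : ℕ} (h0 : 0 < k) (t : Fin k) (ht : (t : ℕ) ≠ 0) {i j : Fin n}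
    (hij : i ≠ j) (p q : NKVertex n k) :
    (p.1 t = i ∧ q.1 t = j ∧ (nkStar n k).Adj p q) ↔
      p.1 t = i ∧ p.1 ⟨0, h0⟩ = j ∧ q = swapVertex ⟨0, h0⟩ t p := by
  have tz : t ≠ ⟨0, h0⟩ := fun h => ht (congrArg Fin.val h)
  -- A swap that changes bit `t` uses position `t`.
  have key : ∀ a b : NKVertex n k, a.1 t ≠ b.1 t → SwapRel a b ∨ UnswapRel a b →
      b = swapVertex ⟨0, h0⟩ t a := by
    rintro a b hab (⟨_, s, hs, h⟩ | ⟨_, h, _⟩)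
    · by_cases hst : s = t
      · subst hst
        exact Subtype.ext h
      · refine absurd ?_ hab
        rw [h, Function.comp_apply, Equiv.swap_apply_of_ne_of_ne tz (Ne.symm hst)]
    · exact absurd (h t ht).symm hab
  constructor
  · rintro ⟨hp, hq, -, hadj⟩
    have hne : p.1 t ≠ q.1 t := by rw [hp, hq]; exact hij
    have hq' : q = swapVertex ⟨0, h0⟩ t p := by
      rcases hadj with h | h
      · exact key p q hne h
      · rw [key q p hne.symm h]
        apply Subtype.ext
        funext x
        simp [swapVertex]
    refine ⟨hp, ?_, hq'⟩
    rw [← hq, hq']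
    simp [swapVertex]
  · rintro ⟨hp, hz, rfl⟩
    have hq : (swapVertex ⟨0, h0⟩ t p).1 t = j := by simpa [swapVertex] using hz
    refine ⟨hp, hq, ?_, Or.inl (Or.inl ⟨h0, t, ht, rfl⟩)⟩
    intro h
    exact hij (by rw [← hp, ← hq, ← h])

/-- For `2 ≤ k ≤ n−1`, a fixed position `t` with `2 ≤ t ≤ k` (encoded as
`t : Fin k` with `1 ≤ t`), and distinct `i, j ∈ {1,…,n}`, the edges of `S_{n,k}`
joining a vertex with `t`-th bit `i` to a vertex with `t`-th bit `j` are exactly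
`(n−2)!/(n−k)!` in number, each is a swap-edge, and they are pairwise
independent. -/
theorem nkStar_cross_edges (n k : ℕ) (hk : 2 ≤ k) (hkn : k < n)
    (t : Fin k) (ht : 1 ≤ (t : ℕ)) (i j : Fin n) (hij : i ≠ j)
    (E : Set (NKVertex n k × NKVertex n k))
    (hE : E = {e | e.1.1 t = i ∧ e.2.1 t = j ∧ (nkStar n k).Adj e.1 e.2}) :
    E.ncard = Nat.factorial (n - 2) / Nat.factorial (n - k) ∧
    (∀ e ∈ E, SwapRel e.1 e.2 ∨ SwapRel e.2 e.1) ∧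
    (∀ e ∈ E, ∀ e' ∈ E, e ≠ e' → e.1 ≠ e'.1 ∧ e.2 ≠ e'.2) := by
  have h0 : 0 < k := by omega
  have ht0 : (t : ℕ) ≠ 0 := by omega
  have tz : t ≠ ⟨0, h0⟩ := fun h => ht0 (congrArg Fin.val h)
  have hmem : ∀ e, e ∈ E ↔
      e.1.1 t = i ∧ e.1.1 ⟨0, h0⟩ = j ∧ e.2 = swapVertex ⟨0, h0⟩ t e.1 := by
    intro e
    rw [hE]
    exact cross_edge_iff h0 t ht0 hij e.1 e.2
  refine ⟨?_, ?_, ?_⟩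
  · let F : ({x : Fin k // x ≠ ⟨0, h0⟩ ∧ x ≠ t} ↪ {y : Fin n // y ≠ j ∧ y ≠ i}) →
        NKVertex n k × NKVertex n k := fun f =>
      (fillVertex ⟨0, h0⟩ t i j hij f,
        swapVertex ⟨0, h0⟩ t (fillVertex ⟨0, h0⟩ t i j hij f))
    have hF : Function.Injective F := by
      intro f g hfg
      ext ⟨x, hx⟩ : 2
      have h := congrFun (congrArg Subtype.val (congrArg Prod.fst hfg)) x
      simpa [F, fillVertex, hx.1, hx.2] using h
    have hrange : E = Set.range F := by
      ext ⟨p, q⟩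
      rw [hmem]
      constructor
      · rintro ⟨hp, hz, hq⟩
        dsimp only at hp hz hq
        subst hq
        let f : {x : Fin k // x ≠ ⟨0, h0⟩ ∧ x ≠ t} ↪ {y : Fin n // y ≠ j ∧ y ≠ i} :=
          ⟨fun x => ⟨p.1 x.1, fun h => x.2.1 (p.2 (h.trans hz.symm)),
              fun h => x.2.2 (p.2 (h.trans hp.symm))⟩,
            fun x y hxy => Subtype.ext (p.2 (congrArg Subtype.val hxy))⟩
        have hfill : fillVertex ⟨0, h0⟩ t i j hij f = p := by
          apply Subtype.ext
          funext x
          dsimp only [fillVertex, f, Function.Embedding.coeFn_mk]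
          split_ifs with h1 h2
          · rw [h1, hz]
          · rw [h2, hp]
          · rfl
        refine ⟨f, ?_⟩
        dsimp only [F]
        rw [hfill]
      · rintro ⟨f, hf⟩
        obtain ⟨rfl, rfl⟩ := Prod.mk.inj hf
        refine ⟨?_, ?_, rfl⟩
        · simp [fillVertex, tz]
        · simp [fillVertex]
    have hpos : Fintype.card {x : Fin k // x ≠ ⟨0, h0⟩ ∧ x ≠ t} = k - 2 := by
      have h : (Finset.univ.filter fun x : Fin k => x ≠ ⟨0, h0⟩ ∧ x ≠ t)
          = {⟨0, h0⟩, t}ᶜ := by ext; simp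
      rw [Fintype.card_subtype, h, Finset.card_compl, Finset.card_pair tz.symm, Fintype.card_fin]
    have hsym : Fintype.card {y : Fin n // y ≠ j ∧ y ≠ i} = n - 2 := by
      have h : (Finset.univ.filter fun y : Fin n => y ≠ j ∧ y ≠ i) = {j, i}ᶜ := by ext; simp
      rw [Fintype.card_subtype, h, Finset.card_compl, Finset.card_pair hij.symm, Fintype.card_fin]
    rw [hrange, ← Nat.card_coe_set_eq, Nat.card_range_of_injective hF, Nat.card_eq_fintype_card,
      Fintype.card_embedding_eq, hpos, hsym, Nat.descFactorial_eq_div (by omega)]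
    congr 2
    omega
  · intro e he
    obtain ⟨-, -, h⟩ := (hmem e).1 he
    exact Or.inl ⟨h0, t, ht0, congrArg Subtype.val h⟩
  · intro e he e' he' hne
    obtain ⟨-, -, h⟩ := (hmem e).1 he
    obtain ⟨-, -, h'⟩ := (hmem e').1 he'
    have hfst : e.1 ≠ e'.1 := fun h1 => hne (Prod.ext h1 (by rw [h, h', h1]))
    refine ⟨hfst, fun h2 => hfst ?_⟩
    -- Precomposition with a permutation is injective, so `e.2` determines `e.1`.
    rw [h, h'] at h2
    exact Subtype.ext ((Equiv.swap (⟨0, h0⟩ : Fin k) t).surjective.injective_comp_right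
      (congrArg Subtype.val h2))
end

section
/- In the (n,k)-star graph S_{n,k} with 2 ≤ k ≤ n−1, every cycle that contains at least one swap-edge has length at least 6. -/
/-- A move with label `m`. For `m = z` the entries away from the base position `z` are
unchanged; for `m ≠ z` the entries at `z` and `m` are exchanged and all others are unchanged. -/
def Move {α β : Type*} (z m : α) (p q : α → β) : Prop :=
  (m ≠ z → q z = p m ∧ q m = p z) ∧ ∀ j, j ≠ z → j ≠ m → q j = p j

/-- A closed sequence of five moves, indexed cyclically by `Fin 5`, in which no edge of a
genuine swap (label different from `z`) is traversed back at another time. Moves with label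
`z` may be stationary, so shorter closed walks are covered by padding. -/
structure FiveCycle {α β : Type*} (z : α) (v : Fin 5 → α → β) (m : Fin 5 → α) : Prop where
  inj : ∀ t, (v t).Injective
  move : ∀ t, Move z (m t) (v t) (v (t + 1))
  norev : ∀ s t, s ≠ t → m s ≠ z → m t ≠ z → ¬ (v s = v (t + 1) ∧ v (s + 1) = v t)

namespace FiveCycle

variable {α β : Type*} {z : α} {v : Fin 5 → α → β} {m : Fin 5 → α}

theorem fin_five : ∀ t : Fin 5, t + 4 + 1 = t ∧ t ≠ t + 1 ∧ t ≠ t + 2 := by decide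

/-- A swap changes the entry at its label, so a later move must restore it. -/
theorem once (h : FiveCycle z v m) (t : Fin 5) (ht : m t ≠ z) :
    m (t + 1) = m t ∨ m (t + 2) = m t ∨ m (t + 3) = m t ∨ m (t + 4) = m t := by
  by_contra! hc
  have h0 := ((h.move t).1 ht).2
  have h1 := (h.move (t + 1)).2 _ ht hc.1.symm
  have h2 := (h.move (t + 2)).2 _ ht hc.2.1.symm
  have h3 := (h.move (t + 3)).2 _ ht hc.2.2.1.symm
  have h4 := (h.move (t + 4)).2 _ ht hc.2.2.2.symm
  have e1 : t + 1 + 1 = t + 2 := by grind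
  have e2 : t + 2 + 1 = t + 3 := by grind
  have e3 : t + 3 + 1 = t + 4 := by grind
  have e4 : t + 4 + 1 = t := (fin_five t).1
  rw [e1] at h1; rw [e2] at h2; rw [e3] at h3; rw [e4] at h4
  exact ht (h.inj t (by rw [h4, h3, h2, h1, h0]))

/-- Two consecutive swaps at the same position cancel, so they traverse one edge back and forth. -/
theorem adj (h : FiveCycle z v m) (t : Fin 5) (ht : m t ≠ z) : m (t + 1) ≠ m t := by
  intro he
  have h0 := h.move t
  have h1 := h.move (t + 1)
  rw [he] at h1
  refine h.norev t (t + 1) (fin_five t).2.1 ht (he ▸ ht) ⟨?_, rfl⟩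
  funext j
  have a0 := h0.1 ht
  have a1 := h1.1 ht
  by_cases j1 : j = z
  · grind
  by_cases j2 : j = m t
  · grind
  rw [h1.2 j j1 j2, h0.2 j j1 j2]

/-- Two tails differing in one position are joined by only one swap-edge, so two swaps at the
same position whose other moves all fix the tail traverse the same edge. -/
theorem two (h : FiveCycle z v m) (t : Fin 5) (ht : m t ≠ z) (h1 : m (t + 1) = z)
    (h2 : m (t + 2) = m t) (h3 : m (t + 3) = z) (h4 : m (t + 4) = z) : False := by
  have e1 : t + 1 + 1 = t + 2 := by grind
  have e2 : t + 2 + 1 = t + 3 := by grind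
  have e3 : t + 3 + 1 = t + 4 := by grind
  have e4 : t + 4 + 1 = t := (fin_five t).1
  have s0 := h.move t
  have s1 := h.move (t + 1)
  have s2 := h.move (t + 2)
  have s3 := h.move (t + 3)
  have s4 := h.move (t + 4)
  rw [h1, e1] at s1; rw [h2, e2] at s2; rw [h3, e3] at s3; rw [h4, e4] at s4
  have a0 := s0.1 ht
  have a2 := s2.1 ht
  have b1 := s1.2 _ ht ht
  have b3 := s3.2 _ ht ht
  have b4 := s4.2 _ ht ht
  refine h.norev t (t + 2) (fin_five t).2.2 ht (h2 ▸ ht) ⟨?_, ?_⟩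
  · funext j
    rw [e2]
    by_cases j1 : j = z
    · grind
    · rw [s4.2 j j1 j1, s3.2 j j1 j1]
  · funext j
    by_cases j1 : j = z
    · grind
    · rw [s1.2 j j1 j1]

/-- Four consecutive swaps alternating between two positions `x`, `y` do not restore the
entry at `x`: they turn `(h, a, b)` at `(z, x, y)` into `(a, b, h)`. -/
theorem alt (h : FiveCycle z v m) (t : Fin 5) (ht : m t ≠ z) (h1 : m (t + 1) ≠ z)
    (h2 : m (t + 2) = m t) (h3 : m (t + 3) = m (t + 1)) (h4 : m (t + 4) = z) : False := by
  have e1 : t + 1 + 1 = t + 2 := by grind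
  have e2 : t + 2 + 1 = t + 3 := by grind
  have e3 : t + 3 + 1 = t + 4 := by grind
  have e4 : t + 4 + 1 = t := (fin_five t).1
  have hne := h.adj t ht
  have s0 := h.move t
  have s1 := h.move (t + 1)
  have s2 := h.move (t + 2)
  have s3 := h.move (t + 3)
  have s4 := h.move (t + 4)
  rw [e1] at s1; rw [h2, e2] at s2; rw [h3, e3] at s3; rw [h4, e4] at s4
  have a0 := s0.1 ht
  have a1 := s1.1 h1
  have a2 := s2.1 ht
  have a3 := s3.1 h1
  have b0 := s0.2 _ h1 hne
  have b1 := s1.2 _ ht hne.symm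
  have b2 := s2.2 _ h1 hne
  have b3 := s3.2 _ ht hne.symm
  have b4 := s4.2 _ ht ht
  exact hne.symm (h.inj t (by grind))

/-- No closed sequence of five moves as above contains a swap. -/
theorem label_eq (h : FiveCycle z v m) (t : Fin 5) : m t = z := by
  have o := h.once
  have a := h.adj
  have w := h.two
  have l := h.alt
  simp only [Fin.forall_fin_succ, Fin.isValue] at o a w l
  simp at o a w l
  have : m 0 = z ∧ m 1 = z ∧ m 2 = z ∧ m 3 = z ∧ m 4 = z := by
    clear h
    by_cases h0 : m 0 = z <;> by_cases h1 : m 1 = z <;> by_cases h2 : m 2 = z <;>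
      by_cases h3 : m 3 = z <;> by_cases h4 : m 4 = z <;>
      simp only [h0, h1, h2, h3, h4, not_true, not_false_eq_true, true_implies, false_implies,
        true_and, and_true, implies_true] at o a w l ⊢ <;> grind
  fin_cases t <;> simp_all

end FiveCycle

theorem move_symm {α β : Type*} {z m : α} {p q : α → β} (h : Move z m p q) : Move z m q p :=
  ⟨fun hm => ⟨((h.1 hm).2).symm, ((h.1 hm).1).symm⟩, fun j h1 h2 => (h.2 j h1 h2).symm⟩

theorem move_of_swapRel {n k : ℕ} (hk : 0 < k) {p q : NKVertex n k} (h : SwapRel p q) :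
    ∃ i, i ≠ ⟨0, hk⟩ ∧ Move (⟨0, hk⟩ : Fin k) i p.1 q.1 := by
  obtain ⟨_, i, hi, h⟩ := h
  refine ⟨i, fun e => hi (by rw [e]), fun _ => ?_, fun j h1 h2 => ?_⟩
  · simp [h]
  · simp [h, Equiv.swap_apply_of_ne_of_ne h1 h2]

theorem move_of_unswapRel {n k : ℕ} (hk : 0 < k) {p q : NKVertex n k} (h : UnswapRel p q) :
    Move (⟨0, hk⟩ : Fin k) ⟨0, hk⟩ p.1 q.1 := by
  obtain ⟨_, h, -⟩ := h
  exact ⟨fun e => absurd rfl e, fun j h1 _ => h j fun e => h1 (Fin.ext e)⟩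

theorem exists_move_of_adj {n k : ℕ} (hk : 0 < k) {p q : NKVertex n k}
    (h : (nkStar n k).Adj p q) : ∃ i, Move (⟨0, hk⟩ : Fin k) i p.1 q.1 := by
  rw [nkStar, SimpleGraph.fromRel_adj] at h
  rcases h.2 with (h | h) | (h | h)
  · exact (move_of_swapRel hk h).imp fun _ => And.right
  · exact ⟨_, move_of_unswapRel hk h⟩
  · exact (move_of_swapRel hk h).imp fun _ h => move_symm h.2
  · exact ⟨_, move_symm (move_of_unswapRel hk h)⟩

/-- In `S_{n,k}` with `2 ≤ k ≤ n−1`, every cycle containing at least one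
swap-edge has length at least `6`. -/
theorem nkStar_cycle_with_swap_edge (n k : ℕ) (hk : 2 ≤ k) (hkn : k < n)
    (v : NKVertex n k) (w : (nkStar n k).Walk v v) (hw : w.IsCycle)
    (hswap : ∃ x y : NKVertex n k, s(x, y) ∈ w.edges ∧ (SwapRel x y ∨ SwapRel y x)) :
    6 ≤ w.length := by
  by_contra! hlen
  have hk0 : 0 < k := by omega
  -- `getVert` is constantly the end point beyond the length, which pads the cycle to length 5.
  have hsucc : ∀ t : Fin 5, w.getVert ((t + 1 : Fin 5) : ℕ) = w.getVert ((t : ℕ) + 1) := by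
    intro t
    rcases eq_or_ne t 4 with rfl | ht
    · have : w.getVert 5 = v := w.getVert_of_length_le (by omega)
      exact w.getVert_zero.trans this.symm
    · congr 1
      revert t; decide
  have hmove : ∀ t : Fin 5, ∃ i, Move (⟨0, hk0⟩ : Fin k) i (w.getVert t).1
      (w.getVert ((t : ℕ) + 1)).1 := by
    intro t
    rcases lt_or_ge (t : ℕ) w.length with ht | ht
    · exact exists_move_of_adj hk0 (w.adj_getVert_succ ht)
    · rw [w.getVert_of_length_le ht, w.getVert_of_length_le (by omega)]
      exact ⟨⟨0, hk0⟩, fun e => absurd rfl e, fun _ _ _ => rfl⟩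
  choose m hm using hmove
  -- A genuine swap changes the vertex, so it does not occur in the padding.
  have hlt : ∀ t, m t ≠ ⟨0, hk0⟩ → (t : ℕ) < w.length := by
    intro t ht
    by_contra! hge
    have h1 := ((hm t).1 ht).1
    rw [w.getVert_of_length_le hge, w.getVert_of_length_le (by omega)] at h1
    exact ht (v.2 h1).symm
  have hcyc : FiveCycle (⟨0, hk0⟩ : Fin k) (fun t => (w.getVert (t : ℕ)).1) m := by
    refine ⟨fun t => (w.getVert t).2, fun t => ?_, fun s t hst hs ht hrev => ?_⟩
    · simpa only [hsucc] using hm t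
    · simp only [hsucc] at hrev
      have hs' : (s : ℕ) < w.edges.length := by simpa using hlt s hs
      have ht' : (t : ℕ) < w.edges.length := by simpa using hlt t ht
      have : w.edges[(s : ℕ)] = w.edges[(t : ℕ)] := by
        rw [SimpleGraph.Walk.getElem_edges, SimpleGraph.Walk.getElem_edges, Subtype.ext hrev.1, Subtype.ext hrev.2, Sym2.eq_swap]
      exact hst (Fin.ext ((hw.edges_nodup.getElem_inj_iff).1 this))
  obtain ⟨x, y, hxy, hs⟩ := hswap
  obtain ⟨i, hi, hie⟩ := w.mk_mem_edges_iff_exists.1 hxy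
  have hi' : i < 5 := by omega
  have hfix := hm ⟨i, hi'⟩
  rw [hcyc.label_eq] at hfix
  have hsw : ∃ j, j ≠ ⟨0, hk0⟩ ∧
      Move (⟨0, hk0⟩ : Fin k) j (w.getVert i).1 (w.getVert (i + 1)).1 := by
    have hx : ∃ j, j ≠ ⟨0, hk0⟩ ∧ Move (⟨0, hk0⟩ : Fin k) j x.1 y.1 := by
      rcases hs with hs | hs
      · exact move_of_swapRel hk0 hs
      · exact (move_of_swapRel hk0 hs).imp fun _ h => ⟨h.1, move_symm h.2⟩
    rcases Sym2.eq_iff.1 hie with ⟨h1, h2⟩ | ⟨h1, h2⟩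
    · rwa [h1, h2]
    · rw [h1, h2]
      exact hx.imp fun _ h => ⟨h.1, move_symm h.2⟩
  -- An edge that fixes the tail cannot exchange two distinct entries.
  obtain ⟨j, hj, hj'⟩ := hsw
  exact hj ((w.getVert i).2 ((hfix.2 j hj hj).symm.trans (hj'.1 hj).2))
end

section
/- Let 3 ≤ k ≤ n−1 and 1 ≤ h ≤ n−k. Let S be a minimum h-super vertex-cut of S_{n,k}, let X be the vertex set of a connected component of S_{n,k}−S, and fix t with 2 ≤ t ≤ k. For each i ∈ {1,…,n} set S_i = S ∩ V(S^{t:i}_{n−1,k−1}), X_i = X ∩ V(S^{t:i}_{n−1,k−1}), Y_i = Y ∩ V(S^{t:i}_{n−1,k−1}) where Y = V(S_{n,k}) \ (S ∪ X), and let J′ = { i : X_i ≠ ∅ and Y_i ≠ ∅ }. Then for every i ∈ J′, the set S_i is an (h−1)-super vertex-cut of S^{t:i}_{n−1,k−1}. -/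
instance (n k : ℕ) : Finite (NKVertex n k) :=
  inferInstanceAs (Finite {p : Fin k → Fin n // Function.Injective p})

/-- An edge that changes the `t`-th bit, where `t` is not the first position, is the swap of the
first bit with the `t`-th. -/
theorem eq_swap_of_adj {n k : ℕ} (hk : 0 < k) (t : Fin k) (ht : 1 ≤ (t : ℕ)) (p q : NKVertex n k)
    (hpq : (nkStar n k).Adj p q) (hne : q.1 t ≠ p.1 t) :
    q.1 = p.1 ∘ Equiv.swap ⟨0, hk⟩ t := by
  have key : ∀ p q : NKVertex n k, q.1 t ≠ p.1 t → (SwapRel p q ∨ UnswapRel p q) →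
      q.1 = p.1 ∘ Equiv.swap ⟨0, hk⟩ t := by
    rintro p q hne (⟨_, j, -, hq⟩ | ⟨_, hq, -⟩)
    · by_cases hjt : j = t
      · rw [← hjt]; exact hq
      · refine absurd ?_ hne
        have h0 : t ≠ ⟨0, hk⟩ := by
          intro h
          rw [h] at ht
          simp at ht
        rw [hq, Function.comp_apply, Equiv.swap_apply_of_ne_of_ne h0 (Ne.symm hjt)]
    · exact absurd (hq t (by omega)) hne
  obtain ⟨-, h | h⟩ := (SimpleGraph.fromRel_adj _ p q).1 hpq
  · exact key p q hne h
  · have := key q p hne.symm h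
    rw [this]
    ext j
    simp

/-- Let `3 ≤ k ≤ n−1`, `1 ≤ h ≤ n−k`, let `S` be a minimum `h`-super vertex-cut
of `S_{n,k}`, let `X` be the vertex set of a connected component of
`S_{n,k} − S`, and fix a position `t` with `2 ≤ t ≤ k` (encoded as `t : Fin k`
with `1 ≤ t`).  If `i` is such that both `X` and `Y = V ∖ (S ∪ X)` meet the
subgraph `S^{t:i}_{n−1,k−1}` of vertices with `t`-th bit `i`, then
`S_i = S ∩ V(S^{t:i}_{n−1,k−1})` is an `(h−1)`-super vertex-cut of
`S^{t:i}_{n−1,k−1}`. -/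
theorem nkStar_section_cut (n k h : ℕ) (hk : 3 ≤ k) (hkn : k < n)
    (hh1 : 1 ≤ h) (hh : h ≤ n - k)
    (S : Set (NKVertex n k)) (hS : IsHSuperCut (nkStar n k) h S)
    (hSmin : S.ncard = hSuperConn (nkStar n k) h)
    (C : ((nkStar n k).induce Sᶜ).ConnectedComponent)
    (X : Set (NKVertex n k)) (hX : X = Subtype.val '' C.supp)
    (t : Fin k) (ht : 1 ≤ (t : ℕ)) (i : Fin n)
    (hXi : (X ∩ {x : NKVertex n k | x.1 t = i}).Nonempty)
    (hYi : ((Sᶜ \ X) ∩ {x : NKVertex n k | x.1 t = i}).Nonempty) :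
    IsHSuperCut ((nkStar n k).induce {x : NKVertex n k | x.1 t = i}) (h - 1)
      {x : {y : NKVertex n k | y.1 t = i} | (x : NKVertex n k) ∈ S} := by
  have hk0 : 0 < k := by omega
  refine ⟨fun hconn => ?_, fun v hv => ?_⟩
  · obtain ⟨x, hxX, hxi⟩ := hXi
    obtain ⟨y, ⟨hyS, hyX⟩, hyi⟩ := hYi
    rw [hX] at hxX hyX
    obtain ⟨⟨x', hxS⟩, hxC, rfl⟩ := hxX
    have hr := hconn.preconnected ⟨⟨x', hxi⟩, hxS⟩ ⟨⟨y, hyi⟩, hyS⟩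
    let f : (((nkStar n k).induce {x : NKVertex n k | x.1 t = i}).induce
        {x : {y : NKVertex n k | y.1 t = i} | (x : NKVertex n k) ∈ S}ᶜ) →g
        (nkStar n k).induce Sᶜ := ⟨fun z => ⟨z.1.1, z.2⟩, fun h => h⟩
    have hr' := hr.map f
    refine hyX ⟨⟨y, hyS⟩, ?_, rfl⟩
    rw [SimpleGraph.ConnectedComponent.mem_supp_iff] at hxC ⊢
    rw [← hxC]
    exact (SimpleGraph.ConnectedComponent.eq.2 hr').symm
  · have hdeg := hS.2 v.1 hv
    have hvi : v.1.1 t = i := v.2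
    -- `w` is the only neighbour of `v` that can lie outside the section.
    let w : NKVertex n k := ⟨v.1.1 ∘ Equiv.swap ⟨0, hk0⟩ t,
      v.1.2.comp (Equiv.injective _)⟩
    set N := ((nkStar n k).induce {x : NKVertex n k | x.1 t = i}).neighborSet v ∩
      {x : {y : NKVertex n k | y.1 t = i} | (x : NKVertex n k) ∈ S}ᶜ with hN
    have hsub : (nkStar n k).neighborSet v.1 ∩ Sᶜ ⊆ insert w (Subtype.val '' N) := by
      rintro q ⟨hq, hqS⟩
      by_cases hqi : q.1 t = i
      · exact Or.inr ⟨⟨q, hqi⟩, ⟨hq, hqS⟩, rfl⟩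
      · exact Or.inl (Subtype.ext
          (eq_swap_of_adj hk0 t ht v.1 q hq (by rw [hvi]; exact hqi)))
    have h1 := Set.ncard_le_ncard hsub (Set.toFinite _)
    have h2 := Set.ncard_insert_le w (Subtype.val '' N)
    rw [Set.ncard_image_of_injective N Subtype.val_injective] at h2
    omega
end

section
/- Let 3 ≤ k ≤ n−1 and 1 ≤ h ≤ n−k. Let S be a minimum h-super vertex-cut of S_{n,k}, let X be the vertex set of a connected component of S_{n,k}−S, and fix t with 2 ≤ t ≤ k. With Y = V(S_{n,k}) \ (S ∪ X), J = { i ∈ {1,…,n} : X ∩ V(S^{t:i}_{n−1,k−1}) ≠ ∅ } and T = { i ∈ {1,…,n} : Y ∩ V(S^{t:i}_{n−1,k−1}) ≠ ∅ }, it holds that J ∪ T = {1,…,n}; that is, no subgraph S^{t:i}_{n−1,k−1} has all of its vertices contained in S. -/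
instance nkVertexFinite (n k : ℕ) : Finite (NKVertex n k) :=
  inferInstanceAs (Finite {p : Fin k → Fin n // Function.Injective p})

/-! ### Subgraphs with a fixed bit -/

/-- Renaming symbols by a transposition shows that all subgraphs fixing the `t`-th bit have the
same size. -/
theorem ncard_fiber_eq {n k : ℕ} (t : Fin k) (i j : Fin n) :
    {x : NKVertex n k | x.1 t = i}.ncard = {x : NKVertex n k | x.1 t = j}.ncard := by
  refine Set.ncard_congr
    (fun x _ => ⟨Equiv.swap i j ∘ x.1, (Equiv.injective _).comp x.2⟩) ?_ ?_ ?_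
  · intro x hx
    have hx' : x.1 t = i := hx
    change Equiv.swap i j (x.1 t) = j
    rw [hx', Equiv.swap_apply_left]
  · intro x y _ _ hxy
    exact Subtype.ext ((Equiv.injective (Equiv.swap i j)).comp_left (congrArg Subtype.val hxy))
  · intro y hy
    have hy' : y.1 t = j := hy
    refine ⟨⟨Equiv.swap i j ∘ y.1, (Equiv.injective _).comp y.2⟩, ?_, ?_⟩
    · change Equiv.swap i j (y.1 t) = i
      rw [hy', Equiv.swap_apply_right]
    apply Subtype.ext
    funext a
    simp

theorem card_nkVertex (n k : ℕ) : Nat.card (NKVertex n k) = n.descFactorial k := by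
  have e : NKVertex n k ≃ (Fin k ↪ Fin n) := Equiv.subtypeInjectiveEquivEmbedding _ _
  rw [Nat.card_congr e, Nat.card_eq_fintype_card, Fintype.card_embedding_eq]
  simp

theorem ncard_fiber {n k : ℕ} (t : Fin (k + 1)) (i : Fin (n + 1)) :
    {x : NKVertex (n + 1) (k + 1) | x.1 t = i}.ncard = n.descFactorial k := by
  have h1 : Nat.card (NKVertex (n + 1) (k + 1))
      = ∑ j : Fin (n + 1), {x : NKVertex (n + 1) (k + 1) | x.1 t = j}.ncard := by
    rw [← Nat.card_congr (Equiv.sigmaFiberEquiv (fun x : NKVertex (n + 1) (k + 1) => x.1 t)),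
      Nat.card_sigma]
    rfl
  rw [card_nkVertex, Finset.sum_congr rfl (fun j _ => ncard_fiber_eq t j i),
    Nat.succ_descFactorial_succ] at h1
  simp only [Finset.sum_const, Finset.card_univ, Fintype.card_fin, smul_eq_mul] at h1
  exact (Nat.eq_of_mul_eq_mul_left (Nat.succ_pos n) h1).symm

theorem le_descFactorial {m k : ℕ} (hk : 2 ≤ k) (hkm : k ≤ m) :
    m * (m - 1) ≤ m.descFactorial k := by
  induction k, hk using Nat.le_induction with
  | base => simp [Nat.descFactorial_succ, Nat.mul_comm]
  | succ k hk ih =>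
    rw [Nat.descFactorial_succ]
    exact (ih (by omega)).trans (Nat.le_mul_of_pos_left _ (by omega))

theorem le_ncard_fiber {n k : ℕ} (hk : 3 ≤ k) (hkn : k < n) (t : Fin k) (i : Fin n) :
    (n - 1) * (n - 2) ≤ {x : NKVertex n k | x.1 t = i}.ncard := by
  obtain ⟨n, rfl⟩ : ∃ m, n = m + 1 := ⟨n - 1, by omega⟩
  obtain ⟨k, rfl⟩ : ∃ m, k = m + 1 := ⟨k - 1, by omega⟩
  rw [ncard_fiber]
  exact le_descFactorial (by omega) (by omega)

/-! ### Neighbours -/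

/-- The vertex obtained from `v` by swapping the bits at positions `a` and `b`. -/
def swapBits {n k : ℕ} (v : NKVertex n k) (a b : Fin k) : NKVertex n k :=
  ⟨v.1 ∘ Equiv.swap a b, v.2.comp (Equiv.injective _)⟩

theorem swapBits_swapBits {n k : ℕ} (v : NKVertex n k) (a b : Fin k) :
    swapBits (swapBits v a b) a b = v := by
  apply Subtype.ext
  funext j
  simp [swapBits]

/-- The vertex obtained from `v` by writing the unused symbol `a` at position `z`. -/
def replaceBit {n k : ℕ} (z : Fin k) (v : NKVertex n k) (a : ((Set.range v.1)ᶜ : Set (Fin n))) :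
    NKVertex n k :=
  ⟨Function.update v.1 z a.1, by
    have ha : ∀ j, v.1 j ≠ a.1 := fun j hj => a.2 ⟨j, hj⟩
    intro x y hxy
    by_cases hx : x = z <;> by_cases hy : y = z
    · rw [hx, hy]
    · subst hx
      simp only [Function.update_self, Function.update_of_ne hy] at hxy
      exact absurd hxy.symm (ha y)
    · subst hy
      simp only [Function.update_self, Function.update_of_ne hx] at hxy
      exact absurd hxy (ha x)
    · simp only [Function.update_of_ne hx, Function.update_of_ne hy] at hxy
      exact v.2 hxy⟩

theorem replaceBit_self {n k : ℕ} (z : Fin k) (v : NKVertex n k)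
    (a : ((Set.range v.1)ᶜ : Set (Fin n))) : (replaceBit z v a).1 z = a.1 := by
  simp [replaceBit]

theorem replaceBit_of_ne {n k : ℕ} {z j : Fin k} (v : NKVertex n k)
    (a : ((Set.range v.1)ᶜ : Set (Fin n))) (hj : j ≠ z) : (replaceBit z v a).1 j = v.1 j := by
  simp [replaceBit, hj]

theorem replaceBit_injective {n k : ℕ} (z : Fin k) (v : NKVertex n k) :
    Function.Injective (replaceBit z v) := by
  intro a b hab
  apply Subtype.ext
  rw [← replaceBit_self z v a, ← replaceBit_self z v b, hab]

theorem ncard_range_replaceBit {n k : ℕ} (z : Fin k) (v : NKVertex n k) :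
    (Set.range (replaceBit z v)).ncard = n - k := by
  have h1 : (Set.range (replaceBit z v)).ncard = ((Set.range v.1)ᶜ : Set (Fin n)).ncard := by
    rw [← Set.image_univ, Set.ncard_image_of_injective _ (replaceBit_injective z v),
      Set.ncard_univ]
    rfl
  have h2 : (Set.range v.1).ncard = k := by
    rw [← Set.image_univ, Set.ncard_image_of_injective _ v.2, Set.ncard_univ]
    simp
  rw [h1, Set.ncard_compl, h2]
  simp

theorem adj_swapBits {n k : ℕ} (hk : 0 < k) (v : NKVertex n k) {i : Fin k} (hi : i ≠ ⟨0, hk⟩) :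
    (nkStar n k).Adj v (swapBits v ⟨0, hk⟩ i) := by
  rw [nkStar, SimpleGraph.fromRel_adj]
  refine ⟨?_, Or.inl (Or.inl ⟨hk, i, fun h => hi (Fin.ext h), rfl⟩)⟩
  intro h
  have h1 : v.1 i = (swapBits v ⟨0, hk⟩ i).1 i := by rw [← h]
  exact hi (v.2 (by simpa [swapBits] using h1))

theorem adj_replaceBit {n k : ℕ} (hk : 0 < k) (v : NKVertex n k)
    (a : ((Set.range v.1)ᶜ : Set (Fin n))) : (nkStar n k).Adj v (replaceBit ⟨0, hk⟩ v a) := by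
  rw [nkStar, SimpleGraph.fromRel_adj]
  refine ⟨?_, Or.inl (Or.inr ⟨hk, ?_, ?_⟩)⟩
  · intro h
    have h1 := replaceBit_self ⟨0, hk⟩ v a
    rw [← h] at h1
    exact a.2 ⟨_, h1⟩
  · intro j hj
    exact replaceBit_of_ne v a (fun h => hj (congrArg Fin.val h))
  · rw [replaceBit_self]
    exact a.2

/-- Every neighbour of `u` either arises by swapping the first bit, or agrees with `u` off the
first bit. -/
theorem adj_cases {n k : ℕ} (hk : 0 < k) {u v : NKVertex n k} (h : (nkStar n k).Adj u v) :
    (∃ i : Fin k, i ≠ ⟨0, hk⟩ ∧ v = swapBits u ⟨0, hk⟩ i) ∨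
      ∀ j : Fin k, j ≠ ⟨0, hk⟩ → v.1 j = u.1 j := by
  rw [nkStar, SimpleGraph.fromRel_adj] at h
  obtain ⟨-, (⟨_, i, hi, h⟩ | ⟨_, h, -⟩) | (⟨_, i, hi, h⟩ | ⟨_, h, -⟩)⟩ := h
  · exact Or.inl ⟨i, fun h => hi (congrArg Fin.val h), Subtype.ext h⟩
  · exact Or.inr fun j hj => h j fun h' => hj (Fin.ext h')
  · refine Or.inl ⟨i, fun h => hi (congrArg Fin.val h), ?_⟩
    have : u = swapBits v ⟨0, hk⟩ i := Subtype.ext h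
    rw [this, swapBits_swapBits]
  · exact Or.inr fun j hj => (h j fun h' => hj (Fin.ext h')).symm

/-! ### The neighbourhood of a maximal clique -/

/-- The maximal clique of vertices agreeing with `p` at every position other than `z`
(which is always the first one below). -/
def cliqueOf {n k : ℕ} (z : Fin k) (p : NKVertex n k) : Set (NKVertex n k) :=
  {v | ∀ j, j ≠ z → v.1 j = p.1 j}

/-- The set of neighbours of `cliqueOf z p` outside it: those `v` for which swapping bit `z` with
some other bit `i` gives a vertex of the clique. -/
def cliqueBdry {n k : ℕ} (z : Fin k) (p : NKVertex n k) : Set (NKVertex n k) :=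
  {v | ∃ i, i ≠ z ∧ v.1 z = p.1 i ∧ ∀ j, j ≠ z → j ≠ i → v.1 j = p.1 j}

theorem not_mem_clique_of_mem_bdry {n k : ℕ} {z : Fin k} {p v : NKVertex n k}
    (hv : v ∈ cliqueBdry z p) : v ∉ cliqueOf z p := by
  obtain ⟨i, hi, h0, -⟩ := hv
  intro hq
  exact hi (v.2 ((hq i hi).trans h0.symm))

theorem swapBits_mem_bdry {n k : ℕ} {z i : Fin k} {p u : NKVertex n k} (hi : i ≠ z)
    (hu : u ∈ cliqueOf z p) : swapBits u z i ∈ cliqueBdry z p := by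
  refine ⟨i, hi, ?_, ?_⟩
  · simp [swapBits, hu i hi]
  · intro j hj hji
    simp [swapBits, Equiv.swap_apply_of_ne_of_ne hj hji, hu j hj]

theorem bdry_subset {n k : ℕ} (z : Fin k) (p : NKVertex n k) :
    cliqueBdry z p ⊆ (fun x : Fin k × NKVertex n k => swapBits x.2 z x.1) ''
      (({z}ᶜ : Set (Fin k)) ×ˢ cliqueOf z p) := by
  rintro v ⟨i, hi, h0, hv⟩
  refine ⟨(i, swapBits v z i), ⟨hi, ?_⟩, swapBits_swapBits v z i⟩
  intro j hj
  by_cases hji : j = i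
  · subst hji
    simp [swapBits, h0]
  · simp [swapBits, Equiv.swap_apply_of_ne_of_ne hj hji, hv j hj hji]

/-- The clique has exactly `n - k + 1` vertices; excluding just two symbols from bit `z`
gives this weaker bound, which suffices. -/
theorem ncard_clique_le {n k : ℕ} (z a b : Fin k) (haz : a ≠ z) (hbz : b ≠ z) (hab : a ≠ b)
    (p : NKVertex n k) : (cliqueOf z p).ncard ≤ n - 2 := by
  have h1 : (cliqueOf z p).ncard ≤ (({p.1 a, p.1 b} : Set (Fin n))ᶜ).ncard := by
    refine Set.ncard_le_ncard_of_injOn (fun v => v.1 z) ?_ ?_ (Set.toFinite _)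
    · intro v hv hmem
      rcases hmem with h | h
      · exact haz (v.2 ((hv a haz).trans h.symm))
      · exact hbz (v.2 ((hv b hbz).trans h.symm))
    · intro v hv w hw hvw
      apply Subtype.ext
      funext j
      by_cases hj : j = z
      · subst hj
        exact hvw
      · exact (hv j hj).trans (hw j hj).symm
  rw [Set.ncard_compl, Set.ncard_pair (fun h => hab (p.2 h))] at h1
  simpa using h1

theorem ncard_bdry_le {n k : ℕ} (z a b : Fin k) (haz : a ≠ z) (hbz : b ≠ z) (hab : a ≠ b)
    (p : NKVertex n k) : (cliqueBdry z p).ncard ≤ (k - 1) * (n - 2) := by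
  refine (Set.ncard_le_ncard (bdry_subset z p) (Set.toFinite _)).trans ?_
  refine (Set.ncard_image_le (Set.toFinite _)).trans ?_
  rw [Set.ncard_prod, Set.ncard_compl, Set.ncard_singleton]
  simpa using Nat.mul_le_mul_left (k - 1) (ncard_clique_le z a b haz hbz hab p)

/-- Every vertex has at least `n - k` neighbours outside the boundary of the clique. -/
theorem degree_off_bdry {n k : ℕ} (hk : 0 < k) (p v : NKVertex n k) :
    n - k ≤ ((nkStar n k).neighborSet v ∩ (cliqueBdry ⟨0, hk⟩ p)ᶜ).ncard := by
  set z : Fin k := ⟨0, hk⟩ with hz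
  by_cases hdis : ∀ a, replaceBit z v a ∉ cliqueBdry z p
  · rw [← ncard_range_replaceBit z v]
    refine Set.ncard_le_ncard ?_ (Set.toFinite _)
    rintro _ ⟨a, rfl⟩
    exact ⟨adj_replaceBit hk v a, hdis a⟩
  push Not at hdis
  obtain ⟨a, ha⟩ := hdis
  have hnot := not_mem_clique_of_mem_bdry ha
  obtain ⟨i, hi, h0, hag⟩ := ha
  have hvi : ∀ j, j ≠ z → j ≠ i → v.1 j = p.1 j := fun j hj hji => by
    rw [← hag j hj hji, replaceBit_of_ne v a hj]
  have hne : v.1 i ≠ p.1 i := by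
    intro h
    apply hnot
    intro j hj
    rw [replaceBit_of_ne v a hj]
    by_cases hji : j = i
    · rw [hji, h]
    · exact hvi j hj hji
  -- `replaceBit z v a` is the only unswap-neighbour of `v` in the boundary: the position `i`
  -- at which `v` deviates from `p` determines the symbol `a = p i`.
  have huniq : ∀ b, replaceBit z v b ∈ cliqueBdry z p → b = a := by
    rintro b ⟨i', hi', h0', hag'⟩
    have hii : i' = i := by
      by_contra hcon
      exact hne (by rw [← hag' i hi (Ne.symm hcon), replaceBit_of_ne v b hi])
    subst hii
    apply Subtype.ext
    rw [← replaceBit_self z v a, ← replaceBit_self z v b, h0, h0']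
  have hswap : swapBits v z i ∉ cliqueBdry z p := by
    rintro ⟨i', hi', h0', -⟩
    have h1 : v.1 i = p.1 i' := by simpa [swapBits] using h0'
    by_cases hii : i' = i
    · exact hne (by rw [h1, hii])
    · exact hii (v.2 ((hvi i' hi' hii).trans h1.symm))
  have hnr : swapBits v z i ∉ Set.range (replaceBit z v) \ {replaceBit z v a} := by
    rintro ⟨⟨b, hb⟩, -⟩
    have h1 := replaceBit_of_ne v b hi
    rw [hb] at h1
    exact hi (v.2 (by simpa [swapBits] using h1.symm))
  have hcard : (insert (swapBits v z i)
      (Set.range (replaceBit z v) \ {replaceBit z v a})).ncard = n - k := by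
    rw [Set.ncard_insert_of_notMem hnr (Set.toFinite _),
      Set.ncard_sdiff_singleton_add_one (Set.mem_range_self a) (Set.toFinite _), ncard_range_replaceBit]
  rw [← hcard]
  refine Set.ncard_le_ncard ?_ (Set.toFinite _)
  rintro w (rfl | ⟨⟨b, rfl⟩, hb⟩)
  · exact ⟨adj_swapBits hk v hi, hswap⟩
  · exact ⟨adj_replaceBit hk v b, fun hmem => hb (by rw [huniq b hmem]; rfl)⟩

theorem isHSuperCut_bdry {n k h : ℕ} (hk : 3 ≤ k) (hh : h ≤ n - k) (p : NKVertex n k) :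
    IsHSuperCut (nkStar n k) h (cliqueBdry ⟨0, by omega⟩ p) := by
  have hk0 : 0 < k := by omega
  refine ⟨?_, fun v _ => hh.trans (degree_off_bdry hk0 p v)⟩
  set z : Fin k := ⟨0, hk0⟩ with hz
  let a : Fin k := ⟨1, by omega⟩
  let b : Fin k := ⟨2, by omega⟩
  have haz : a ≠ z := by simp [a, hz]
  have hbz : b ≠ z := by simp [b, hz]
  have hab : a ≠ b := by simp [a, b]
  -- `w` deviates from `p` at two positions other than the first, so it lies neither in the
  -- clique nor in its boundary.
  let w := swapBits p a b
  have hwa : w.1 a ≠ p.1 a := by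
    intro h
    exact hab (p.2 (by simpa [w, swapBits] using h.symm))
  have hwb : w.1 b ≠ p.1 b := by
    intro h
    exact hab (p.2 (by simpa [w, swapBits] using h))
  have hw : w ∉ cliqueBdry z p := by
    rintro ⟨i, hi, -, hag⟩
    by_cases hai : a = i
    · exact hwb (hag b hbz (fun h => hab (hai.trans h.symm)))
    · exact hwa (hag a haz hai)
  have hp : p ∈ cliqueOf z p := fun _ _ => rfl
  have hp' : p ∉ cliqueBdry z p := fun hmem => not_mem_clique_of_mem_bdry hmem hp
  intro hcon
  have hstep : ∀ x y : ((cliqueBdry z p)ᶜ : Set (NKVertex n k)),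
      ((nkStar n k).induce (cliqueBdry z p)ᶜ).Adj x y → x.1 ∈ cliqueOf z p →
        y.1 ∈ cliqueOf z p := by
    intro x y hxy hx
    rcases adj_cases hk0 (SimpleGraph.induce_adj.mp hxy) with ⟨i, hi, hy⟩ | hy
    · exact absurd (hy ▸ swapBits_mem_bdry hi hx) y.2
    · exact fun j hj => (hy j hj).trans (hx j hj)
  have hreach : ∀ x y : ((cliqueBdry z p)ᶜ : Set (NKVertex n k)),
      ((nkStar n k).induce (cliqueBdry z p)ᶜ).Walk x y → x.1 ∈ cliqueOf z p →
        y.1 ∈ cliqueOf z p := by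
    intro x y walk
    induction walk with
    | nil => exact id
    | cons hadj _ ih => exact fun hx => ih (hstep _ _ hadj hx)
  obtain ⟨walk⟩ := hcon.preconnected ⟨p, hp'⟩ ⟨w, hw⟩
  exact hwa (hreach _ _ walk hp a haz)

/-- Let `3 ≤ k ≤ n−1`, `1 ≤ h ≤ n−k`, let `S` be a minimum `h`-super vertex-cut
of `S_{n,k}`, let `X` be the vertex set of a connected component of
`S_{n,k} − S`, let `Y = V ∖ (S ∪ X)`, and fix a position `t` with `2 ≤ t ≤ k`
(encoded as `t : Fin k` with `1 ≤ t`).  With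
`J = {i : X meets the vertices with t-th bit i}` and
`T = {i : Y meets the vertices with t-th bit i}`, it holds that `J ∪ T = {1,…,n}`:
no subgraph `S^{t:i}_{n−1,k−1}` has all of its vertices contained in `S`. -/
theorem nkStar_J_union_T (n k h : ℕ) (hk : 3 ≤ k) (hkn : k < n)
    (hh1 : 1 ≤ h) (hh : h ≤ n - k)
    (S : Set (NKVertex n k)) (hS : IsHSuperCut (nkStar n k) h S)
    (hSmin : S.ncard = hSuperConn (nkStar n k) h)
    (C : ((nkStar n k).induce Sᶜ).ConnectedComponent)
    (X : Set (NKVertex n k)) (hX : X = Subtype.val '' C.supp)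
    (t : Fin k) (ht : 1 ≤ (t : ℕ)) :
    {i : Fin n | (X ∩ {x : NKVertex n k | x.1 t = i}).Nonempty} ∪
      {i : Fin n | ((Sᶜ \ X) ∩ {x : NKVertex n k | x.1 t = i}).Nonempty} =
    Set.univ := by
  have hk0 : 0 < k := by omega
  refine Set.eq_univ_of_forall fun i => ?_
  by_contra hi
  have hsub : {x : NKVertex n k | x.1 t = i} ⊆ S := by
    intro x hx
    by_contra hxS
    apply hi
    by_cases hxX : x ∈ X
    · exact Or.inl ⟨x, hxX, hx⟩
    · exact Or.inr ⟨x, ⟨hxS, hxX⟩, hx⟩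
  have h1 := (le_ncard_fiber hk hkn t i).trans (Set.ncard_le_ncard hsub (Set.toFinite _))
  let p : NKVertex n k := ⟨Fin.castLE hkn.le, Fin.castLE_injective hkn.le⟩
  have h2 : hSuperConn (nkStar n k) h ≤ (cliqueBdry ⟨0, hk0⟩ p).ncard :=
    Nat.sInf_le ⟨_, isHSuperCut_bdry hk hh p, rfl⟩
  have h3 := ncard_bdry_le (⟨0, hk0⟩ : Fin k) ⟨1, by omega⟩ ⟨2, by omega⟩
    (by simp) (by simp) (by simp) p
  have h4 : (k - 1) * (n - 2) < (n - 1) * (n - 2) :=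
    Nat.mul_lt_mul_of_pos_right (by omega) (by omega)
  omega
end
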